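/- In the complex numbers, F(1/8,1) + 8i·F(7/8,1) = −2·(1 − i√2)·(1 + √2)·(F(3/8,1) − 2i·F(5/8,1)). -/

import Mathlib

/-- The Pochhammer symbol (x)_k = x(x+1)⋯(x+k−1). -/
noncomputable def poch (x : ℝ) (k : ℕ) : ℝ := ∏ i ∈ Finset.range k, (x + i)

/-- The hypergeometric series ₃F₂(a1,a2,a3;b1,b2;1). -/
noncomputable def threeF2 (a1 a2 a3 b1 b2 : ℝ) : ℝ :=
  ∑' k : ℕ, poch a1 k * poch a2 k * poch a3 k /
    (poch b1 k * poch b2 k * (Nat.factorial k : ℝ))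

/-- The Beta function B(a,b) = Γ(a)Γ(b)/Γ(a+b). -/
noncomputable def betaFn (a b : ℝ) : ℝ :=
  Real.Gamma a * Real.Gamma b / Real.Gamma (a + b)

/-- The normalized hypergeometric value
F(r,s) = (2^{1−4r}·B(r,s−r)/N(r)) · ₃F₂(1/2,1/2,r;1,s;1), where N(r) = 2·den(r). -/
noncomputable def Fval (r s : ℚ) : ℝ :=
  (2:ℝ) ^ ((1:ℝ) - 4 * (r:ℝ)) * betaFn (r:ℝ) ((s:ℝ) - (r:ℝ)) / (2 * (r.den : ℝ)) *
    threeF2 (1/2) (1/2) (r:ℝ) 1 (s:ℝ)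

/-!
By Euler's integrals, `F(r, 1)` is an elementary multiple of the moment
`M(r) = ∫₀¹ p ^ (-1/2) (1 - p) ^ (-r) E(p) dp` of a complete elliptic integral `E`. Cauchy's theorem
for `x ^ (-1/2) (x - u) ^ (-1/2) (x - 1) ^ (-r)` on the upper half-plane, integrated against the
arcsine weight in `u`, gives `sin(πr) M(1 - r) = sin(πr) M'(r) + cos(πr) M(r)`, where `M'` has
`E(1 - p)` in place of `E(p)`.

The substitution `p = 1 - x⁴` turns `M((2j + 1) / 8)` into `∫ x ^ i dμ` with `i + j = 3`, for one
measure `μ` on `(0, 1)`. Two steps of the arithmetic-geometric mean show that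
`x ↦ (1 - x) / (1 + x)` exchanges the elliptic integral with its complement, so
`√2 M'((2j + 1) / 8)` is `∫ (1 - x) ^ i (1 + x) ^ j dμ`. For `j = 0` and `j = 1` the relation above
becomes two linear equations between the first four moments of `μ`, which are equivalent to the real
and imaginary parts of the identity.
-/

open Filter MeasureTheory Set
open scoped ENNReal Topology

section Measure

lemma setLIntegral_eq_of_bijOn {s t : Set ℝ} {f f' : ℝ → ℝ} (hs : MeasurableSet s)
    (hf' : ∀ x ∈ s, HasDerivAt f (f' x) x) (hf : BijOn f s t) (φ : ℝ → ℝ≥0∞) :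
    ∫⁻ y in t, φ y = ∫⁻ x in s, ENNReal.ofReal |f' x| * φ (f x) := by
  rw [← hf.image_eq]
  exact lintegral_image_eq_lintegral_abs_deriv_mul hs
    (fun x hx => (hf' x hx).hasDerivWithinAt) hf.injOn φ

variable {α : Type*} [TopologicalSpace α] [SecondCountableTopology α] [LinearOrder α]
  [OrderClosedTopology α] [MeasurableSpace α] [OpensMeasurableSpace α]

lemma lintegral_lintegral_Iio_swap {μ ν : Measure α} [SFinite μ] [SFinite ν] {F : α → α → ℝ≥0∞}
    (hF : Measurable (Function.uncurry F)) :
    ∫⁻ u, ∫⁻ p in Iio u, F u p ∂ν ∂μ = ∫⁻ p, ∫⁻ u in Ioi p, F u p ∂μ ∂ν := by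
  have hT : MeasurableSet {q : α × α | q.2 < q.1} :=
    measurableSet_lt measurable_snd measurable_fst
  simp_rw [← lintegral_indicator measurableSet_Iio, ← lintegral_indicator measurableSet_Ioi]
  exact lintegral_lintegral_swap (hF.indicator hT).aemeasurable

lemma lintegral_Ioo_Ioo_swap {μ ν : Measure α} [SFinite μ] [SFinite ν] {F : α → α → ℝ≥0∞}
    (hF : Measurable (Function.uncurry F)) (a b : α) :
    ∫⁻ u in Ioo a b, ∫⁻ p in Ioo a u, F u p ∂ν ∂μ =
      ∫⁻ p in Ioo a b, ∫⁻ u in Ioo p b, F u p ∂μ ∂ν := by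
  have h := lintegral_lintegral_Iio_swap (μ := μ.restrict (Ioo a b)) (ν := ν.restrict (Ioo a b)) hF
  simp only [Measure.restrict_restrict measurableSet_Iio,
    Measure.restrict_restrict measurableSet_Ioi] at h
  convert h using 1
  · refine setLIntegral_congr_fun measurableSet_Ioo fun u hu => ?_
    rw [inter_comm, Ioo_inter_Iio, min_eq_right hu.2.le]
  · refine setLIntegral_congr_fun measurableSet_Ioo fun p hp => ?_
    rw [inter_comm, Ioo_inter_Ioi, max_eq_right hp.1.le]

lemma measurable_lintegral_Ioo {β : Type*} [MeasurableSpace β] {ν : Measure α} [SFinite ν]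
    {F : β → α → ℝ≥0∞} (hF : Measurable (Function.uncurry F)) {f g : β → α}
    (hf : Measurable f) (hg : Measurable g) :
    Measurable fun x => ∫⁻ y in Ioo (f x) (g x), F x y ∂ν := by
  have hT : MeasurableSet {q : β × α | f q.1 < q.2 ∧ q.2 < g q.1} :=
    (measurableSet_lt (hf.comp measurable_fst) measurable_snd).inter
      (measurableSet_lt measurable_snd (hg.comp measurable_fst))
  simp_rw [← lintegral_indicator measurableSet_Ioo]
  exact (hF.indicator hT).lintegral_prod_right'

end Measure

section Substitutions

lemma bijOn_const_sub_Ioo (c a b : ℝ) : BijOn (fun x => c - x) (Ioo a b) (Ioo (c - b) (c - a)) := by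
  rw [← image_const_sub_Ioo]
  exact sub_right_injective.injOn.bijOn_image

lemma bijOn_one_sub_Ioo : BijOn (fun x : ℝ => 1 - x) (Ioo 0 1) (Ioo 0 1) := by
  simpa using bijOn_const_sub_Ioo 1 0 1

lemma bijOn_pow_Ioo {n : ℕ} (hn : n ≠ 0) : BijOn (fun x : ℝ => x ^ n) (Ioo 0 1) (Ioo 0 1) :=
  InvOn.bijOn (f' := fun y => y ^ (n⁻¹ : ℝ))
    ⟨fun _ hx => Real.pow_rpow_inv_natCast hx.1.le hn,
      fun _ hy => Real.rpow_inv_natCast_pow hy.1.le hn⟩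
    (fun _ hx => ⟨pow_pos hx.1 n, pow_lt_one₀ hx.1.le hx.2 hn⟩)
    (fun _ hy => ⟨Real.rpow_pos_of_pos hy.1 _, Real.rpow_lt_one hy.1.le hy.2 (by positivity)⟩)

lemma bijOn_div_one_add : BijOn (fun y : ℝ => y / (1 + y)) (Ioi 0) (Ioo 0 1) := by
  refine InvOn.bijOn (f' := fun p => p / (1 - p)) ⟨fun y hy => ?_, fun p hp => ?_⟩
    (fun y hy => ?_) (fun p hp => div_pos hp.1 (sub_pos.2 hp.2))
  · have hy : 0 < y := hy
    field_simp
    ring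
  · have hp : 1 - p ≠ 0 := (sub_pos.2 hp.2).ne'
    field_simp
    ring
  · have hy : 0 < y := hy
    exact ⟨by positivity, by rw [div_lt_one (by positivity)]; linarith⟩

lemma hasDerivAt_div_one_add {y : ℝ} (hy : 1 + y ≠ 0) :
    HasDerivAt (fun y : ℝ => y / (1 + y)) (1 / (1 + y) ^ 2) y := by
  refine ((hasDerivAt_id y).div ((hasDerivAt_id y).const_add 1) hy).congr_deriv ?_
  simp only [id]
  ring

lemma bijOn_one_sub_div_one_add :
    BijOn (fun x : ℝ => (1 - x) / (1 + x)) (Ioo 0 1) (Ioo 0 1) := by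
  have hmaps : MapsTo (fun x : ℝ => (1 - x) / (1 + x)) (Ioo 0 1) (Ioo 0 1) := fun x ⟨h0, h1⟩ =>
    ⟨div_pos (by linarith) (by linarith), by rw [div_lt_one (by linarith)]; linarith⟩
  have hinv : LeftInvOn (fun x : ℝ => (1 - x) / (1 + x)) (fun x => (1 - x) / (1 + x))
      (Ioo 0 1) := fun x ⟨h0, _⟩ => by
    field_simp
    ring
  exact InvOn.bijOn ⟨hinv, hinv⟩ hmaps hmaps

lemma hasDerivAt_one_sub_div_one_add {x : ℝ} (hx : 1 + x ≠ 0) :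
    HasDerivAt (fun x : ℝ => (1 - x) / (1 + x)) (-(2 / (1 + x) ^ 2)) x := by
  refine (((hasDerivAt_id x).const_sub 1).div ((hasDerivAt_id x).const_add 1) hx).congr_deriv ?_
  simp only [id]
  field_simp
  ring

lemma bijOn_sub_sq_div {c : ℝ} (hc : c ≠ 0) :
    BijOn (fun t : ℝ => (t - c ^ 2 / t) / 2) (Ioi 0) univ := by
  have hpos (x : ℝ) : 0 < x + √(x ^ 2 + c ^ 2) := by
    have h : |x| < √(x ^ 2 + c ^ 2) := by
      rw [← Real.sqrt_sq_eq_abs]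
      exact Real.sqrt_lt_sqrt (sq_nonneg x) (lt_add_of_pos_right _ (by positivity))
    linarith [neg_abs_le x]
  refine InvOn.bijOn (f' := fun x => x + √(x ^ 2 + c ^ 2)) ⟨fun t ht => ?_, fun x _ => ?_⟩
    (mapsTo_univ _ _) (fun x _ => hpos x)
  · have ht : 0 < t := ht
    have hsq : ((t - c ^ 2 / t) / 2) ^ 2 + c ^ 2 = ((t + c ^ 2 / t) / 2) ^ 2 := by
      field_simp
      ring
    simp only [hsq, Real.sqrt_sq (show 0 ≤ (t + c ^ 2 / t) / 2 by positivity)]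
    ring
  · have hsq := Real.sq_sqrt (show 0 ≤ x ^ 2 + c ^ 2 by positivity)
    have := (hpos x).ne'
    field_simp
    linear_combination hsq

lemma hasDerivAt_sub_sq_div (c : ℝ) {t : ℝ} (ht : t ≠ 0) :
    HasDerivAt (fun t : ℝ => (t - c ^ 2 / t) / 2) ((1 + c ^ 2 / t ^ 2) / 2) t := by
  simp only [div_eq_mul_inv (c ^ 2)]
  refine HasDerivAt.congr_deriv
    (((hasDerivAt_id t).sub ((hasDerivAt_inv ht).const_mul (c ^ 2))).div_const 2) ?_
  ring

lemma bijOn_sq_add_div_sq_add_one {b : ℝ} (hb : |b| < 1) :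
    BijOn (fun x : ℝ => (x ^ 2 + b ^ 2) / (x ^ 2 + 1)) (Ioi 0) (Ioo (b ^ 2) 1) := by
  have hb2 : 0 < 1 - b ^ 2 := by linarith [sq_lt_one_iff_abs_lt_one b |>.2 hb]
  refine InvOn.bijOn (f' := fun u => √((u - b ^ 2) / (1 - u))) ⟨fun x hx => ?_, fun u hu => ?_⟩
    (fun x hx => ⟨?_, ?_⟩)
    (fun u hu => Real.sqrt_pos.2 (div_pos (sub_pos.2 hu.1) (sub_pos.2 hu.2)))
  · have h1 : 1 - (x ^ 2 + b ^ 2) / (x ^ 2 + 1) = (1 - b ^ 2) / (x ^ 2 + 1) := by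
      field_simp
      ring
    have h2 : ((x ^ 2 + b ^ 2) / (x ^ 2 + 1) - b ^ 2) / (1 - (x ^ 2 + b ^ 2) / (x ^ 2 + 1)) =
        x ^ 2 := by
      rw [h1]
      field_simp
      ring
    simp only [h2, Real.sqrt_sq (le_of_lt hx)]
  · have h1 : 0 < 1 - u := sub_pos.2 hu.2
    have h2 : (u - b ^ 2) / (1 - u) + 1 = (1 - b ^ 2) / (1 - u) := by
      field_simp
      ring
    simp only [Real.sq_sqrt (div_pos (sub_pos.2 hu.1) h1).le, h2]
    field_simp
    ring
  · have hx : 0 < x := hx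
    rw [lt_div_iff₀ (by positivity)]
    nlinarith [mul_pos (pow_pos hx 2) hb2]
  · rw [div_lt_one (by positivity)]
    linarith

lemma hasDerivAt_sq_add_div_sq_add_one (b x : ℝ) :
    HasDerivAt (fun x : ℝ => (x ^ 2 + b ^ 2) / (x ^ 2 + 1))
      (2 * x * (1 - b ^ 2) / (x ^ 2 + 1) ^ 2) x := by
  refine (((hasDerivAt_pow 2 x).add_const (b ^ 2)).div ((hasDerivAt_pow 2 x).add_const 1)
    (by positivity)).congr_deriv ?_
  field_simp
  ring

end Substitutions

section AGM

/-- Gauss's form of the complete elliptic integral of the first kind,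
`∫₀^∞ dx / √((x² + a²)(x² + b²)) = π / (2 AGM(a, b))`. -/
noncomputable def agmPeriod (a b : ℝ) : ℝ≥0∞ :=
  ∫⁻ x in Ioi 0, ENNReal.ofReal (√((x ^ 2 + a ^ 2) * (x ^ 2 + b ^ 2)))⁻¹

lemma agmPeriod_mul {a b c : ℝ} (hc : 0 < c) (ha : a ≠ 0) (hb : b ≠ 0) :
    agmPeriod (c * a) (c * b) = ENNReal.ofReal c⁻¹ * agmPeriod a b := by
  have hmul : BijOn (fun x => c * x) (Ioi 0) (Ioi (0 : ℝ)) :=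
    InvOn.bijOn (f' := fun x => c⁻¹ * x)
      ⟨fun x _ => inv_mul_cancel_left₀ hc.ne' x, fun x _ => mul_inv_cancel_left₀ hc.ne' x⟩
      (fun x hx => mul_pos hc hx) (fun x hx => mul_pos (inv_pos.2 hc) hx)
  rw [agmPeriod, agmPeriod, setLIntegral_eq_of_bijOn measurableSet_Ioi
    (fun x _ => by simpa using (hasDerivAt_id x).const_mul c) hmul,
    ← lintegral_const_mul _ (by fun_prop)]
  refine lintegral_congr fun x => ?_
  rw [← ENNReal.ofReal_mul (by positivity), ← ENNReal.ofReal_mul (by positivity), abs_of_pos hc,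
    show ((c * x) ^ 2 + (c * a) ^ 2) * ((c * x) ^ 2 + (c * b) ^ 2) =
      (x ^ 2 + a ^ 2) * (x ^ 2 + b ^ 2) * (c ^ 2) ^ 2 by ring,
    Real.sqrt_mul (by positivity), Real.sqrt_sq (by positivity)]
  congr 1
  have : 0 < √((x ^ 2 + a ^ 2) * (x ^ 2 + b ^ 2)) := Real.sqrt_pos.2 (by positivity)
  field_simp

lemma lintegral_eq_two_mul_of_even {φ : ℝ → ℝ≥0∞} (hφ : ∀ x, φ (-x) = φ x) :
    ∫⁻ x, φ x = 2 * ∫⁻ x in Ioi 0, φ x := by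
  have hneg : ∫⁻ x in Iio 0, φ x = ∫⁻ x in Ioi 0, φ x := by
    have := (Measure.measurePreserving_neg (volume : Measure ℝ)).setLIntegral_comp_preimage_emb
      (MeasurableEquiv.neg ℝ).measurableEmbedding φ (Ioi 0)
    simpa [hφ] using this
  rw [← lintegral_add_compl φ (measurableSet_Ioi (a := (0 : ℝ))), compl_Ioi,
    setLIntegral_congr Iio_ae_eq_Iic.symm, hneg, two_mul]

lemma agmPeriod_mean {a b c : ℝ} (ha : 0 < a) (hb : 0 < b) (hc : c ^ 2 = a * b) :
    agmPeriod ((a + b) / 2) c = agmPeriod a b := by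
  have hc0 : c ≠ 0 := fun h => (mul_pos ha hb).ne' (by rw [← hc, h, sq, zero_mul])
  suffices key : 2 * agmPeriod ((a + b) / 2) c = 2 * agmPeriod a b from
    (ENNReal.mul_right_inj two_ne_zero ENNReal.ofNat_ne_top).1 key
  rw [agmPeriod, ← lintegral_eq_two_mul_of_even (fun x => by simp only [neg_sq]),
    ← setLIntegral_univ, setLIntegral_eq_of_bijOn measurableSet_Ioi
      (fun t ht => hasDerivAt_sub_sq_div c (ne_of_gt ht)) (bijOn_sub_sq_div hc0),
    agmPeriod, ← lintegral_const_mul _ (by fun_prop)]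
  refine setLIntegral_congr_fun measurableSet_Ioi fun t ht => ?_
  have ht : 0 < t := ht
  have hprod : (((t - c ^ 2 / t) / 2) ^ 2 + ((a + b) / 2) ^ 2) *
      (((t - c ^ 2 / t) / 2) ^ 2 + c ^ 2) =
      ((t ^ 2 + a ^ 2) * (t ^ 2 + b ^ 2)) * ((1 + c ^ 2 / t ^ 2) / 4) ^ 2 := by
    rw [hc]
    field_simp
    ring
  rw [← ENNReal.ofReal_ofNat 2, ← ENNReal.ofReal_mul (by positivity),
    ← ENNReal.ofReal_mul (by positivity), hprod, Real.sqrt_mul (by positivity),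
    Real.sqrt_sq (by positivity), abs_of_pos (by positivity)]
  congr 1
  have : 0 < √((t ^ 2 + a ^ 2) * (t ^ 2 + b ^ 2)) := Real.sqrt_pos.2 (by positivity)
  field_simp
  ring

lemma agmPeriod_sq_sq {a b c : ℝ} (ha : 0 < a) (hb : 0 < b)
    (hc : c ^ 2 = a * b * ((a ^ 2 + b ^ 2) / 2)) :
    agmPeriod (a ^ 2) (b ^ 2) = agmPeriod (((a + b) / 2) ^ 2) c := by
  calc agmPeriod (a ^ 2) (b ^ 2) = agmPeriod ((a ^ 2 + b ^ 2) / 2) (a * b) :=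
        (agmPeriod_mean (by positivity) (by positivity) (by ring)).symm
    _ = agmPeriod (((a ^ 2 + b ^ 2) / 2 + a * b) / 2) c :=
        (agmPeriod_mean (by positivity) (by positivity) (by rw [hc]; ring)).symm
    _ = agmPeriod (((a + b) / 2) ^ 2) c := by ring_nf

end AGM

section EllipticPeriod

/-- `∫_p^1 du / √(u (1 - u) (u - p))`, which is twice the complete elliptic integral of the first
kind with parameter `1 - p` (the square of the modulus). -/
noncomputable def ellipticPeriod (p : ℝ) : ℝ≥0∞ :=
  ∫⁻ u in Ioo p 1, ENNReal.ofReal (√(u * (1 - u) * (u - p)))⁻¹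

@[fun_prop]
lemma measurable_ellipticPeriod : Measurable ellipticPeriod :=
  measurable_lintegral_Ioo (F := fun p u => ENNReal.ofReal (√(u * (1 - u) * (u - p)))⁻¹)
    (by simp only [Function.uncurry_def]; fun_prop) measurable_id measurable_const

lemma ellipticPeriod_one_sub (x : ℝ) :
    ellipticPeriod (1 - x) =
      ∫⁻ u in Ioo 0 x, ENNReal.ofReal (√(u * (1 - u) * (x - u)))⁻¹ := by
  have hbij : BijOn (fun u => 1 - u) (Ioo 0 x) (Ioo (1 - x) 1) := by
    simpa using bijOn_const_sub_Ioo 1 0 x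
  rw [ellipticPeriod, setLIntegral_eq_of_bijOn measurableSet_Ioo
    (fun u _ => by simpa using (hasDerivAt_id u).const_sub 1) hbij]
  refine lintegral_congr fun u => ?_
  rw [abs_neg, abs_one, ENNReal.ofReal_one, one_mul]
  ring_nf

lemma ellipticPeriod_div_one_add {y : ℝ} (hy : 0 < y) :
    ellipticPeriod (y / (1 + y)) = ENNReal.ofReal (√(1 + y)) *
      ∫⁻ u in Ioo (0 : ℝ) 1, ENNReal.ofReal (√(u * (1 - u) * (u + y)))⁻¹ := by
  have h1y : 0 < 1 + y := by positivity
  have hbij : BijOn (fun u => (u + y) / (1 + y)) (Ioo 0 1) (Ioo (y / (1 + y)) 1) := by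
    refine InvOn.bijOn (f' := fun v => v * (1 + y) - y)
      ⟨fun u _ => by field_simp; ring, fun v _ => by field_simp; ring⟩
      (fun u hu => ⟨by gcongr; linarith [hu.1], by rw [div_lt_one h1y]; linarith [hu.2]⟩)
      (fun v hv => ⟨sub_pos.2 ((div_lt_iff₀ h1y).1 hv.1), by nlinarith [hv.2]⟩)
  rw [ellipticPeriod, setLIntegral_eq_of_bijOn measurableSet_Ioo
    (fun u _ => ((hasDerivAt_id' u).add_const y).div_const (1 + y)) hbij,
    ← lintegral_const_mul _ (by fun_prop)]
  refine setLIntegral_congr_fun measurableSet_Ioo fun u hu => ?_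
  have hprod : (u + y) / (1 + y) * (1 - (u + y) / (1 + y)) * ((u + y) / (1 + y) - y / (1 + y)) =
      u * (1 - u) * (u + y) / (1 + y) ^ 2 / (1 + y) := by
    field_simp
    ring
  rw [← ENNReal.ofReal_mul (by positivity), ← ENNReal.ofReal_mul (by positivity), hprod,
    Real.sqrt_div' _ h1y.le, Real.sqrt_div' _ (by positivity), Real.sqrt_sq h1y.le,
    abs_of_pos (by positivity)]
  congr 1
  have : 0 < √(u * (1 - u) * (u + y)) :=
    Real.sqrt_pos.2 (mul_pos (mul_pos hu.1 (sub_pos.2 hu.2)) (add_pos hu.1 hy))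
  field_simp

lemma ellipticPeriod_sq {b : ℝ} (hb : b ≠ 0) (hb1 : |b| < 1) :
    ellipticPeriod (b ^ 2) = 2 * agmPeriod 1 b := by
  have hb2 : 0 < 1 - b ^ 2 := by linarith [sq_lt_one_iff_abs_lt_one b |>.2 hb1]
  rw [ellipticPeriod, agmPeriod, setLIntegral_eq_of_bijOn measurableSet_Ioi
    (fun x _ => hasDerivAt_sq_add_div_sq_add_one b x) (bijOn_sq_add_div_sq_add_one hb1),
    ← lintegral_const_mul _ (by fun_prop)]
  refine setLIntegral_congr_fun measurableSet_Ioi fun x hx => ?_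
  have hx : 0 < x := hx
  have hprod : (x ^ 2 + b ^ 2) / (x ^ 2 + 1) * (1 - (x ^ 2 + b ^ 2) / (x ^ 2 + 1)) *
      ((x ^ 2 + b ^ 2) / (x ^ 2 + 1) - b ^ 2) =
      ((x ^ 2 + 1 ^ 2) * (x ^ 2 + b ^ 2)) * (x * (1 - b ^ 2) / (x ^ 2 + 1) ^ 2) ^ 2 := by
    field_simp
    ring
  rw [← ENNReal.ofReal_ofNat 2, ← ENNReal.ofReal_mul (by positivity),
    ← ENNReal.ofReal_mul (by positivity), hprod, Real.sqrt_mul (by positivity),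
    Real.sqrt_sq (by positivity), abs_of_pos (by positivity)]
  congr 1
  have : 0 < √((x ^ 2 + 1 ^ 2) * (x ^ 2 + b ^ 2)) := Real.sqrt_pos.2 (by positivity)
  field_simp

lemma ellipticPeriod_div_pow_four {x : ℝ} (hx : x ∈ Ioo (0 : ℝ) 1) :
    ellipticPeriod (((1 - x) / (1 + x)) ^ 4) =
      ENNReal.ofReal ((1 + x) ^ 2) * ellipticPeriod (1 - x ^ 4) := by
  set s := (1 - x) / (1 + x) with hs
  obtain ⟨hs0, hs1⟩ : s ∈ Ioo 0 1 := bijOn_one_sub_div_one_add.mapsTo hx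
  have h0 : 0 < 1 + x := by linarith [hx.1]
  have h1 : 0 < 1 - x := sub_pos.2 hx.2
  have hx4 : 0 < x ^ 4 ∧ 0 < 1 - x ^ 4 :=
    ⟨pow_pos hx.1 4, sub_pos.2 (pow_lt_one₀ hx.1.le hx.2 four_ne_zero)⟩
  have hb0 : √(1 - x ^ 4) ≠ 0 := (Real.sqrt_pos.2 hx4.2).ne'
  have hbsq : √(1 - x ^ 4) ^ 2 = 1 - x ^ 4 := Real.sq_sqrt hx4.2.le
  have hb1 : |√(1 - x ^ 4)| < 1 := by rw [← sq_lt_one_iff_abs_lt_one, hbsq]; linarith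
  have hs2 : |s ^ 2| < 1 := by rw [abs_sq, sq_lt_one_iff_abs_lt_one, abs_of_pos hs0]; exact hs1
  calc ellipticPeriod (s ^ 4) = 2 * agmPeriod (1 ^ 2) (s ^ 2) := by
        rw [one_pow, ← ellipticPeriod_sq (by positivity) hs2, ← pow_mul]
    _ = 2 * agmPeriod (((1 + s) / 2) ^ 2) (((1 + x) ^ 2)⁻¹ * √(1 - x ^ 4)) := by
        rw [agmPeriod_sq_sq one_pos hs0]
        rw [mul_pow, hbsq, hs]
        field_simp
        ring
    _ = 2 * agmPeriod (((1 + x) ^ 2)⁻¹ * 1) (((1 + x) ^ 2)⁻¹ * √(1 - x ^ 4)) := by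
        congr 2
        rw [hs]
        field_simp
        ring
    _ = ENNReal.ofReal ((1 + x) ^ 2) * ellipticPeriod (√(1 - x ^ 4) ^ 2) := by
        rw [agmPeriod_mul (by positivity) one_ne_zero hb0, ellipticPeriod_sq hb0 hb1, inv_inv,
          mul_left_comm]
    _ = ENNReal.ofReal ((1 + x) ^ 2) * ellipticPeriod (1 - x ^ 4) := by rw [hbsq]

end EllipticPeriod

section EllipticMoment

/-- The moment `∫₀¹ p ^ (-1/2) (1 - p) ^ (-r) E(p) dp` of `E = ellipticPeriod`; for `0 < r < 1` it
is `π² ₃F₂(1/2, 1/2, r; 1, 1; 1)`. -/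
noncomputable def ellipticMoment (r : ℝ) : ℝ≥0∞ :=
  ∫⁻ p in Ioo (0 : ℝ) 1, ENNReal.ofReal ((√p)⁻¹ * (1 - p) ^ (-r)) * ellipticPeriod p

/-- The moment `∫₀¹ p ^ (-1/2) (1 - p) ^ (-r) E(1 - p) dp` of the complementary elliptic period,
where `E = ellipticPeriod`. -/
noncomputable def complementaryMoment (r : ℝ) : ℝ≥0∞ :=
  ∫⁻ p in Ioo (0 : ℝ) 1, ENNReal.ofReal ((√p)⁻¹ * (1 - p) ^ (-r)) * ellipticPeriod (1 - p)

lemma lintegral_arcsine_mul_Ioo_zero (r : ℝ) :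
    ∫⁻ u in Ioo (0 : ℝ) 1, ENNReal.ofReal (√(u * (1 - u)))⁻¹ *
      ∫⁻ p in Ioo 0 u, ENNReal.ofReal ((√(p * (u - p)))⁻¹ * (1 - p) ^ (-r)) =
        ellipticMoment r := by
  simp_rw [← lintegral_const_mul' _ _ ENNReal.ofReal_ne_top]
  rw [lintegral_Ioo_Ioo_swap (by simp only [Function.uncurry_def]; fun_prop), ellipticMoment]
  refine setLIntegral_congr_fun measurableSet_Ioo fun p hp => ?_
  simp only [ellipticPeriod]
  rw [← lintegral_const_mul' _ _ ENNReal.ofReal_ne_top]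
  refine setLIntegral_congr_fun measurableSet_Ioo fun u hu => ?_
  have h1p : 0 ≤ (1 - p) ^ (-r) := Real.rpow_nonneg (sub_nonneg.2 hp.2.le) _
  rw [← ENNReal.ofReal_mul (by positivity), ← ENNReal.ofReal_mul (by positivity),
    Real.sqrt_mul hp.1.le, Real.sqrt_mul' _ (sub_nonneg.2 hu.1.le)]
  congr 1
  simp only [mul_inv]
  ring

lemma lintegral_arcsine_mul_Ioo_one (r : ℝ) :
    ∫⁻ u in Ioo (0 : ℝ) 1, ENNReal.ofReal (√(u * (1 - u)))⁻¹ *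
      ∫⁻ x in Ioo u 1, ENNReal.ofReal ((√(x * (x - u)))⁻¹ * (1 - x) ^ (-r)) =
        complementaryMoment r := by
  simp_rw [← lintegral_const_mul' _ _ ENNReal.ofReal_ne_top]
  rw [← lintegral_Ioo_Ioo_swap (F := fun x u => ENNReal.ofReal (√(u * (1 - u)))⁻¹ *
    ENNReal.ofReal ((√(x * (x - u)))⁻¹ * (1 - x) ^ (-r)))
    (by simp only [Function.uncurry_def]; fun_prop), complementaryMoment]
  refine setLIntegral_congr_fun measurableSet_Ioo fun x hx => ?_
  simp only [ellipticPeriod_one_sub]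
  rw [← lintegral_const_mul' _ _ ENNReal.ofReal_ne_top]
  refine setLIntegral_congr_fun measurableSet_Ioo fun u hu => ?_
  have h1x : 0 ≤ (1 - x) ^ (-r) := Real.rpow_nonneg (sub_nonneg.2 hx.2.le) _
  rw [← ENNReal.ofReal_mul (by positivity), ← ENNReal.ofReal_mul (by positivity),
    Real.sqrt_mul hx.1.le, Real.sqrt_mul' _ (sub_nonneg.2 hu.2.le)]
  congr 1
  simp only [mul_inv]
  ring

lemma div_one_add_rpow_mul_sqrt (r : ℝ) {y : ℝ} (hy : 0 < y) :
    1 / (1 + y) ^ 2 * ((√(y / (1 + y)))⁻¹ * (1 - y / (1 + y)) ^ (-(1 - r))) * √(1 + y) =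
      (√y)⁻¹ * (1 + y) ^ (-r) := by
  have h1y : 0 < 1 + y := by positivity
  have hsq : √(1 + y) ^ 2 = 1 + y := Real.sq_sqrt h1y.le
  rw [show 1 - y / (1 + y) = (1 + y)⁻¹ by field_simp; ring, Real.inv_rpow h1y.le,
    ← Real.rpow_neg h1y.le, neg_neg, sub_eq_add_neg, Real.rpow_add h1y, Real.rpow_one,
    Real.sqrt_div hy.le]
  field_simp
  exact hsq

lemma lintegral_arcsine_mul_Ioi (r : ℝ) :
    ∫⁻ u in Ioo (0 : ℝ) 1, ENNReal.ofReal (√(u * (1 - u)))⁻¹ *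
      ∫⁻ y in Ioi 0, ENNReal.ofReal ((√(y * (u + y)))⁻¹ * (1 + y) ^ (-r)) =
        ellipticMoment (1 - r) := by
  simp_rw [← lintegral_const_mul' _ _ ENNReal.ofReal_ne_top]
  rw [lintegral_lintegral_swap (by simp only [Function.uncurry_def]; fun_prop), ellipticMoment,
    setLIntegral_eq_of_bijOn measurableSet_Ioi
      (fun y hy => hasDerivAt_div_one_add (add_pos one_pos hy).ne') bijOn_div_one_add]
  refine setLIntegral_congr_fun measurableSet_Ioi fun y hy => ?_
  have hy : 0 < y := hy
  have hp : 0 ≤ 1 - y / (1 + y) := sub_nonneg.2 (bijOn_div_one_add.mapsTo hy).2.le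
  simp only [ellipticPeriod_div_one_add hy]
  rw [← mul_assoc, ← mul_assoc, ← lintegral_const_mul' _ _ (by finiteness)]
  refine setLIntegral_congr_fun measurableSet_Ioo fun u hu => ?_
  rw [abs_of_pos (by positivity), ← ENNReal.ofReal_mul (by positivity),
    ← ENNReal.ofReal_mul (by positivity), ← ENNReal.ofReal_mul (by positivity),
    ← ENNReal.ofReal_mul (by positivity), div_one_add_rpow_mul_sqrt r hy,
    Real.sqrt_mul hy.le, Real.sqrt_mul' _ (add_pos hu.1 hy).le]
  congr 1
  simp only [mul_inv]
  ring

end EllipticMoment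

section QuarticMeasure

lemma lintegral_beta_weight_eq_comp_one_sub_pow (r : ℝ) {n : ℕ} (hn : n ≠ 0) (φ : ℝ → ℝ≥0∞) :
    ∫⁻ p in Ioo (0 : ℝ) 1, ENNReal.ofReal ((√p)⁻¹ * (1 - p) ^ (-r)) * φ p =
      ∫⁻ x in Ioo (0 : ℝ) 1,
        ENNReal.ofReal (n * (√(1 - x ^ n))⁻¹ * x ^ (n - 1 - n * r)) * φ (1 - x ^ n) := by
  rw [setLIntegral_eq_of_bijOn measurableSet_Ioo
    (fun x _ => (hasDerivAt_pow n x).const_sub 1)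
    (bijOn_one_sub_Ioo.comp (bijOn_pow_Ioo hn))]
  refine setLIntegral_congr_fun measurableSet_Ioo fun x hx => ?_
  have hx0 : 0 < x := hx.1
  have hpow : x ^ (n - 1 - n * r : ℝ) = x ^ (n - 1) * (x ^ n) ^ (-r) := by
    rw [← Real.rpow_natCast x n, ← Real.rpow_mul hx0.le, ← Real.rpow_natCast x (n - 1),
      ← Real.rpow_add hx0, Nat.cast_sub (Nat.one_le_iff_ne_zero.2 hn)]
    ring_nf
  simp only [sub_sub_cancel]
  rw [← mul_assoc, ← ENNReal.ofReal_mul (by positivity), abs_neg, abs_of_nonneg (by positivity),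
    hpow]
  ring_nf

/-- The measure on `(0, 1)` obtained from `p ^ (-1/2) (1 - p) ^ (-7/8) E(p) dp`, with
`E = ellipticPeriod`, by the substitution `p = 1 - x ^ 4`. -/
noncomputable def quarticMeasure : Measure ℝ :=
  (volume.restrict (Ioo 0 1)).withDensity fun x =>
    ENNReal.ofReal (4 * (√x)⁻¹ * (√(1 - x ^ 4))⁻¹) * ellipticPeriod (1 - x ^ 4)

lemma ae_quarticMeasure_mem_Ioo : ∀ᵐ x ∂quarticMeasure, x ∈ Ioo (0 : ℝ) 1 :=
  (withDensity_absolutelyContinuous _ _).ae_le (ae_restrict_mem measurableSet_Ioo)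

lemma lintegral_quarticMeasure {f : ℝ → ℝ≥0∞} (hf : Measurable f) :
    ∫⁻ x, f x ∂quarticMeasure = ∫⁻ x in Ioo (0 : ℝ) 1,
      ENNReal.ofReal (4 * (√x)⁻¹ * (√(1 - x ^ 4))⁻¹) * ellipticPeriod (1 - x ^ 4) * f x :=
  lintegral_withDensity_eq_lintegral_mul _ (by fun_prop) hf

lemma ellipticMoment_eq_lintegral_pow {i j : ℕ} (hij : i + j = 3) :
    ellipticMoment ((2 * j + 1) / 8) = ∫⁻ x, ENNReal.ofReal (x ^ i) ∂quarticMeasure := by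
  rw [ellipticMoment, lintegral_beta_weight_eq_comp_one_sub_pow _ four_ne_zero,
    lintegral_quarticMeasure (by fun_prop)]
  refine setLIntegral_congr_fun measurableSet_Ioo fun x hx => ?_
  have hij' : (i : ℝ) + j = 3 := mod_cast hij
  have hpow : x ^ ((4 : ℕ) - 1 - (4 : ℕ) * ((2 * j + 1) / 8) : ℝ) = (√x)⁻¹ * x ^ i := by
    rw [Real.sqrt_eq_rpow, ← Real.rpow_neg hx.1.le, ← Real.rpow_natCast x i,
      ← Real.rpow_add hx.1]
    congr 1
    push_cast
    linear_combination -hij'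
  rw [mul_right_comm _ (ellipticPeriod _), ← ENNReal.ofReal_mul (by positivity), hpow,
    Nat.cast_ofNat]
  ring_nf

lemma cayley_weight {i j : ℕ} (hij : i + j = 3) {x : ℝ} (hx : x ∈ Ioo (0 : ℝ) 1) :
    √2 * (2 / (1 + x) ^ 2 * (4 * (√(1 - ((1 - x) / (1 + x)) ^ 4))⁻¹ *
      ((√((1 - x) / (1 + x)))⁻¹ * ((1 - x) / (1 + x)) ^ i)) * (1 + x) ^ 2) =
      4 * (√x)⁻¹ * (√(1 - x ^ 4))⁻¹ * ((1 - x) ^ i * (1 + x) ^ j) := by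
  have h0 : 0 < x := hx.1
  have h1 : 0 < 1 - x := sub_pos.2 hx.2
  have hfac : 1 - ((1 - x) / (1 + x)) ^ 4 = 2 * x * (1 + x ^ 2) * (2 / (1 + x) ^ 2) ^ 2 := by
    field_simp
    ring
  have hpow : (1 + x) ^ 2 * (1 + x) = (1 + x) ^ i * (1 + x) ^ j := by
    rw [← pow_succ, ← pow_add, hij]
  have hsq : √(1 + x) ^ 2 = 1 + x := Real.sq_sqrt (by positivity)
  rw [hfac, show 1 - x ^ 4 = (1 - x) * (1 + x) * (1 + x ^ 2) by ring,
    Real.sqrt_mul (by positivity), Real.sqrt_sq (by positivity), Real.sqrt_mul (by positivity),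
    Real.sqrt_mul (by positivity), Real.sqrt_mul (by positivity), Real.sqrt_mul h1.le,
    Real.sqrt_div h1.le, div_pow]
  have : 0 < √(1 - x) := Real.sqrt_pos.2 h1
  have : 0 < √(1 + x) := Real.sqrt_pos.2 (by positivity)
  field_simp
  rw [hsq]
  linear_combination hpow

lemma sqrt_two_mul_complementaryMoment {i j : ℕ} (hij : i + j = 3) :
    ENNReal.ofReal √2 * complementaryMoment ((2 * j + 1) / 8) =
      ∫⁻ x, ENNReal.ofReal ((1 - x) ^ i * (1 + x) ^ j) ∂quarticMeasure := by
  rw [complementaryMoment, lintegral_beta_weight_eq_comp_one_sub_pow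
    (φ := fun p => ellipticPeriod (1 - p)) _ four_ne_zero,
    setLIntegral_eq_of_bijOn measurableSet_Ioo
      (fun x hx => hasDerivAt_one_sub_div_one_add (add_pos one_pos hx.1).ne')
      bijOn_one_sub_div_one_add,
    lintegral_quarticMeasure (by fun_prop), ← lintegral_const_mul' _ _ ENNReal.ofReal_ne_top]
  refine setLIntegral_congr_fun measurableSet_Ioo fun x hx => ?_
  have hs : 0 < (1 - x) / (1 + x) := (bijOn_one_sub_div_one_add.mapsTo hx).1
  have hx0 : 0 < x := hx.1
  have hij' : (i : ℝ) + j = 3 := mod_cast hij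
  have hpow : ((1 - x) / (1 + x)) ^ ((4 : ℕ) - 1 - (4 : ℕ) * ((2 * j + 1) / 8) : ℝ) =
      (√((1 - x) / (1 + x)))⁻¹ * ((1 - x) / (1 + x)) ^ i := by
    rw [Real.sqrt_eq_rpow, ← Real.rpow_neg hs.le, ← Real.rpow_natCast _ i, ← Real.rpow_add hs]
    congr 1
    push_cast
    linear_combination -hij'
  rw [sub_sub_cancel, ellipticPeriod_div_pow_four hx, hpow, abs_neg, abs_of_pos (by positivity),
    mul_right_comm _ (ellipticPeriod _), ← ENNReal.ofReal_mul (by positivity),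
    ← cayley_weight hij hx, ← mul_assoc (ENNReal.ofReal (_ * _)), ← mul_assoc, ← mul_assoc,
    ← ENNReal.ofReal_mul (by positivity), ← ENNReal.ofReal_mul (by positivity),
    ← ENNReal.ofReal_mul (by positivity), Nat.cast_ofNat]
  ring_nf

end QuarticMeasure

section Pochhammer

lemma poch_succ (x : ℝ) (n : ℕ) : poch x (n + 1) = poch x n * (x + n) := by
  rw [poch, Finset.prod_range_succ, poch]

lemma poch_nonneg {x : ℝ} (hx : 0 ≤ x) (n : ℕ) : 0 ≤ poch x n :=
  Finset.prod_nonneg fun _ _ => by positivity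

lemma poch_mul_Gamma {x : ℝ} (hx : 0 < x) (n : ℕ) :
    poch x n * Real.Gamma x = Real.Gamma (x + n) := by
  induction n with
  | zero => simp only [poch, Finset.range_zero, Finset.prod_empty, one_mul, Nat.cast_zero, add_zero]
  | succ n ih =>
    rw [poch_succ, mul_right_comm, ih, Nat.cast_succ, ← add_assoc,
      Real.Gamma_add_one (by positivity), mul_comm]

lemma poch_eq_factorial_mul_choose (r : ℝ) (n : ℕ) :
    poch r n = n.factorial * Ring.choose (r + n - 1) n := by
  rw [← Ring.multichoose_eq, ← nsmul_eq_mul, Ring.factorial_nsmul_multichoose_eq_ascPochhammer,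
    Polynomial.ascPochhammer_smeval_eq_eval]
  induction n with
  | zero => simp only [poch, Finset.range_zero, Finset.prod_empty, ascPochhammer_zero,
      Polynomial.eval_one]
  | succ n ih => rw [poch_succ, ih, ascPochhammer_succ_eval]

lemma hasSum_one_sub_rpow_neg (r : ℝ) {x : ℝ} (hx : |x| < 1) :
    HasSum (fun n : ℕ => poch r n / n.factorial * x ^ n) ((1 - x) ^ (-r)) := by
  have h := (Real.one_div_one_sub_rpow_hasFPowerSeriesOnBall_zero r).hasSum (y := x) (by
    rw [Metric.mem_eball, edist_dist, Real.dist_eq, sub_zero]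
    exact ENNReal.ofReal_lt_one.2 hx)
  simp only [zero_add, FormalMultilinearSeries.ofScalars_apply_eq, smul_eq_mul, one_div] at h
  rw [Real.rpow_neg (sub_nonneg.2 (abs_lt.1 hx).2.le)]
  refine h.congr_fun fun n => ?_
  rw [poch_eq_factorial_mul_choose, mul_div_cancel_left₀ _ (by positivity)]

end Pochhammer

section EulerIntegral

open ProbabilityTheory

lemma lintegral_rpow_mul_one_sub_rpow {a b : ℝ} (ha : 0 < a) (hb : 0 < b) :
    ∫⁻ x in Ioo (0 : ℝ) 1, ENNReal.ofReal (x ^ (a - 1) * (1 - x) ^ (b - 1)) =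
      ENNReal.ofReal (beta a b) := by
  have hB := beta_pos ha hb
  have h := lintegral_betaPDF_eq_one ha hb
  rw [lintegral_betaPDF] at h
  rw [← mul_one (ENNReal.ofReal _), ← h, ← lintegral_const_mul _ (by fun_prop)]
  refine lintegral_congr fun x => ?_
  rw [← ENNReal.ofReal_mul hB.le]
  congr 1
  field_simp

lemma betaMeasure_eq_withDensity (a b : ℝ) :
    betaMeasure a b = (volume.restrict (Ioo 0 1)).withDensity fun x =>
      ENNReal.ofReal (1 / beta a b * x ^ (a - 1) * (1 - x) ^ (b - 1)) := by
  rw [betaMeasure, ← withDensity_indicator measurableSet_Ioo]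
  congr 1
  ext x
  by_cases hx : x ∈ Ioo (0 : ℝ) 1
  · rw [betaPDF_of_pos_lt_one hx.1 hx.2, indicator_of_mem hx]
  · rw [betaPDF_eq, if_neg (show ¬(0 < x ∧ x < 1) from hx), indicator_of_notMem hx,
      ENNReal.ofReal_zero]

lemma ae_betaMeasure_mem_Ioo (a b : ℝ) : ∀ᵐ x ∂betaMeasure a b, x ∈ Ioo (0 : ℝ) 1 := by
  rw [betaMeasure_eq_withDensity]
  exact (withDensity_absolutelyContinuous _ _).ae_le (ae_restrict_mem measurableSet_Ioo)

lemma beta_mul_lintegral_betaMeasure {a b : ℝ} (ha : 0 < a) (hb : 0 < b) {f : ℝ → ℝ≥0∞}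
    (hf : Measurable f) :
    ENNReal.ofReal (beta a b) * ∫⁻ x, f x ∂betaMeasure a b =
      ∫⁻ x in Ioo (0 : ℝ) 1, ENNReal.ofReal (x ^ (a - 1) * (1 - x) ^ (b - 1)) * f x := by
  have hB := beta_pos ha hb
  rw [betaMeasure_eq_withDensity, lintegral_withDensity_eq_lintegral_mul _ (by fun_prop) hf,
    ← lintegral_const_mul' _ _ ENNReal.ofReal_ne_top]
  refine lintegral_congr fun x => ?_
  rw [Pi.mul_apply, ← mul_assoc, ← ENNReal.ofReal_mul hB.le]
  congr 2
  field_simp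

lemma lintegral_betaMeasure_rpow_mul_rpow {a b s t : ℝ} (ha : 0 < a) (hb : 0 < b)
    (has : 0 < a + s) (hbt : 0 < b + t) :
    ∫⁻ x, ENNReal.ofReal (x ^ s * (1 - x) ^ t) ∂betaMeasure a b =
      ENNReal.ofReal (beta (a + s) (b + t) / beta a b) := by
  have hB := beta_pos ha hb
  rw [ENNReal.ofReal_div_of_pos hB, ENNReal.eq_div_iff (ENNReal.ofReal_pos.2 hB).ne'
    ENNReal.ofReal_ne_top, beta_mul_lintegral_betaMeasure ha hb (by fun_prop),
    ← lintegral_rpow_mul_one_sub_rpow has hbt]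
  refine setLIntegral_congr_fun measurableSet_Ioo fun x hx => ?_
  have h0 : 0 < x := hx.1
  have h1 : 0 < 1 - x := sub_pos.2 hx.2
  rw [← ENNReal.ofReal_mul (by positivity), add_sub_right_comm, add_sub_right_comm,
    Real.rpow_add h0, Real.rpow_add h1]
  ring_nf

lemma lintegral_betaMeasure_pow {a b : ℝ} (ha : 0 < a) (hb : 0 < b) (n : ℕ) :
    ∫⁻ x, ENNReal.ofReal (x ^ n) ∂betaMeasure a b = ENNReal.ofReal (poch a n / poch (a + b) n) := by
  have hab : 0 < a + b := add_pos ha hb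
  have h := lintegral_betaMeasure_rpow_mul_rpow (s := n) (t := 0) ha hb (by positivity)
    (by rwa [add_zero])
  simp only [Real.rpow_natCast, Real.rpow_zero, mul_one, add_zero] at h
  rw [h, beta, beta, add_right_comm, ← poch_mul_Gamma ha, ← poch_mul_Gamma hab]
  have := Real.Gamma_pos_of_pos ha
  have := Real.Gamma_pos_of_pos hb
  have := Real.Gamma_pos_of_pos hab
  congr 1
  field_simp

lemma abs_mul_lt_one_of_mem_Ioo {u v : ℝ} (hu : u ∈ Ioo (0 : ℝ) 1) (hv : v ∈ Ioo (0 : ℝ) 1) :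
    |u * v| < 1 := by
  rw [abs_of_pos (mul_pos hu.1 hv.1)]
  exact mul_lt_one_of_nonneg_of_lt_one_left hu.1.le hu.2 hv.2.le

lemma lintegral_betaMeasure_one_sub_mul_rpow {a b r u : ℝ} (ha : 0 < a) (hb : 0 < b) (hr : 0 ≤ r)
    (hu : u ∈ Ioo (0 : ℝ) 1) :
    ∫⁻ v, ENNReal.ofReal ((1 - u * v) ^ (-r)) ∂betaMeasure a b =
      ∑' n : ℕ, ENNReal.ofReal (poch r n / n.factorial * (poch a n / poch (a + b) n)) *
        ENNReal.ofReal (u ^ n) := by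
  have hr' (n : ℕ) := poch_nonneg hr n
  have hu0 : 0 < u := hu.1
  have hseries : ∀ v ∈ Ioo (0 : ℝ) 1, ENNReal.ofReal ((1 - u * v) ^ (-r)) =
      ∑' n : ℕ, ENNReal.ofReal (poch r n / n.factorial * u ^ n) * ENNReal.ofReal (v ^ n) := by
    intro v hv
    have hv0 : 0 < v := hv.1
    have hsum := hasSum_one_sub_rpow_neg r (abs_mul_lt_one_of_mem_Ioo hu hv)
    have hterm (n : ℕ) : 0 ≤ poch r n / n.factorial * (u * v) ^ n :=
      mul_nonneg (div_nonneg (hr' n) (by positivity)) (by positivity)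
    rw [← hsum.tsum_eq, ENNReal.ofReal_tsum_of_nonneg hterm hsum.summable]
    refine tsum_congr fun n => ?_
    rw [← ENNReal.ofReal_mul' (by positivity), mul_pow, mul_assoc]
  rw [lintegral_congr_ae ((ae_betaMeasure_mem_Ioo a b).mono hseries), lintegral_tsum (by fun_prop)]
  refine tsum_congr fun n => ?_
  rw [lintegral_const_mul' _ _ ENNReal.ofReal_ne_top, lintegral_betaMeasure_pow ha hb,
    ← ENNReal.ofReal_mul' (div_nonneg (poch_nonneg ha.le n) (poch_nonneg (by positivity) n)),
    ← ENNReal.ofReal_mul' (by positivity), mul_right_comm]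

lemma threeF2_eq_lintegral_betaMeasure {a b a' b' r : ℝ} (ha : 0 < a) (hb : 0 < b) (ha' : 0 < a')
    (hb' : 0 < b') (hr : 0 ≤ r) :
    threeF2 a a' r (a + b) (a' + b') =
      (∫⁻ u, ∫⁻ v, ENNReal.ofReal ((1 - u * v) ^ (-r))
        ∂betaMeasure a' b' ∂betaMeasure a b).toReal := by
  have hnn {x : ℝ} (hx : 0 < x) (n : ℕ) := poch_nonneg hx.le n
  rw [lintegral_congr_ae ((ae_betaMeasure_mem_Ioo a b).mono fun u hu =>
    lintegral_betaMeasure_one_sub_mul_rpow ha' hb' hr hu), lintegral_tsum (by fun_prop)]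
  have hmoment (n : ℕ) : 0 ≤ poch a n / poch (a + b) n :=
    div_nonneg (hnn ha n) (hnn (add_pos ha hb) n)
  have hcoeff (n : ℕ) : 0 ≤ poch r n / n.factorial * (poch a' n / poch (a' + b') n) :=
    mul_nonneg (div_nonneg (poch_nonneg hr n) (by positivity))
      (div_nonneg (hnn ha' n) (hnn (add_pos ha' hb') n))
  simp_rw [lintegral_const_mul' _ _ ENNReal.ofReal_ne_top, lintegral_betaMeasure_pow ha hb,
    ← ENNReal.ofReal_mul' (hmoment _)]
  rw [ENNReal.tsum_toReal_eq fun n => ENNReal.ofReal_ne_top, threeF2]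
  refine tsum_congr fun n => ?_
  rw [ENNReal.toReal_ofReal (mul_nonneg (hcoeff n) (hmoment n)), div_mul_div_comm, div_mul_div_comm]
  ring_nf

lemma lintegral_betaMeasure_one_sub_rpow_lt_top {a b s : ℝ} (ha : 0 < a) (hb : 0 < b)
    (hs : s < b) : ∫⁻ x, ENNReal.ofReal ((1 - x) ^ (-s)) ∂betaMeasure a b < ⊤ := by
  have h := lintegral_betaMeasure_rpow_mul_rpow (s := 0) (t := -s) ha hb (by linarith)
    (by linarith)
  simp only [Real.rpow_zero, one_mul] at h
  exact h ▸ ENNReal.ofReal_lt_top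

lemma one_sub_mul_rpow_neg_le {u v s t : ℝ} (hu : u ∈ Ioo (0 : ℝ) 1) (hv : v ∈ Ioo (0 : ℝ) 1)
    (hs : 0 ≤ s) (ht : 0 ≤ t) :
    (1 - u * v) ^ (-(s + t)) ≤ (1 - u) ^ (-s) * (1 - v) ^ (-t) := by
  have hu1 : 0 < 1 - u := sub_pos.2 hu.2
  have hv1 : 0 < 1 - v := sub_pos.2 hv.2
  have huv : 1 - u ≤ 1 - u * v := by nlinarith [hu.1, hv.2]
  have hvu : 1 - v ≤ 1 - u * v := by nlinarith [hv.1, hu.2]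
  rw [neg_add, Real.rpow_add (hu1.trans_le huv)]
  exact mul_le_mul (Real.rpow_le_rpow_of_nonpos hu1 huv (neg_nonpos.2 hs))
    (Real.rpow_le_rpow_of_nonpos hv1 hvu (neg_nonpos.2 ht)) (Real.rpow_nonneg (hu1.le.trans huv) _)
    (Real.rpow_nonneg hu1.le _)

lemma lintegral_betaMeasure_one_sub_mul_rpow_lt_top {a b a' b' r : ℝ} (ha : 0 < a) (hb : 0 < b)
    (ha' : 0 < a') (hb' : 0 < b') (hr : 0 ≤ r) (hrb : r < b + b') :
    ∫⁻ u, ∫⁻ v, ENNReal.ofReal ((1 - u * v) ^ (-r)) ∂betaMeasure a' b' ∂betaMeasure a b < ⊤ := by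
  obtain ⟨s, t, hs, ht, hst, hsb, htb⟩ : ∃ s t, 0 ≤ s ∧ 0 ≤ t ∧ s + t = r ∧ s < b ∧ t < b' := by
    have hbb : 0 < b + b' := add_pos hb hb'
    refine ⟨r * b / (b + b'), r * b' / (b + b'), by positivity, by positivity, ?_, ?_, ?_⟩
    · field_simp
    · rw [div_lt_iff₀ hbb]; nlinarith
    · rw [div_lt_iff₀ hbb]; nlinarith
  have hle : ∀ u ∈ Ioo (0 : ℝ) 1, ∀ v ∈ Ioo (0 : ℝ) 1, ENNReal.ofReal ((1 - u * v) ^ (-r)) ≤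
      ENNReal.ofReal ((1 - u) ^ (-s)) * ENNReal.ofReal ((1 - v) ^ (-t)) := by
    intro u hu v hv
    rw [← ENNReal.ofReal_mul (Real.rpow_nonneg (sub_nonneg.2 hu.2.le) _), ← hst]
    exact ENNReal.ofReal_le_ofReal (one_sub_mul_rpow_neg_le hu hv hs ht)
  have hfin := lintegral_betaMeasure_one_sub_rpow_lt_top ha' hb' htb
  calc ∫⁻ u, ∫⁻ v, ENNReal.ofReal ((1 - u * v) ^ (-r)) ∂betaMeasure a' b' ∂betaMeasure a b
      ≤ ∫⁻ u, ENNReal.ofReal ((1 - u) ^ (-s)) *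
          ∫⁻ v, ENNReal.ofReal ((1 - v) ^ (-t)) ∂betaMeasure a' b' ∂betaMeasure a b := by
        refine lintegral_mono_ae ((ae_betaMeasure_mem_Ioo a b).mono fun u hu => ?_)
        rw [← lintegral_const_mul' _ _ ENNReal.ofReal_ne_top]
        exact lintegral_mono_ae ((ae_betaMeasure_mem_Ioo a' b').mono fun v hv => hle u hu v hv)
    _ = (∫⁻ u, ENNReal.ofReal ((1 - u) ^ (-s)) ∂betaMeasure a b) *
          ∫⁻ v, ENNReal.ofReal ((1 - v) ^ (-t)) ∂betaMeasure a' b' :=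
        lintegral_mul_const' _ _ hfin.ne
    _ < ⊤ := ENNReal.mul_lt_top (lintegral_betaMeasure_one_sub_rpow_lt_top ha hb hsb) hfin

lemma beta_half_half : beta (1 / 2) (1 / 2) = Real.pi := by
  rw [beta, add_halves, Real.Gamma_one, div_one, Real.Gamma_one_half_eq,
    Real.mul_self_sqrt Real.pi_pos.le]

lemma pi_mul_lintegral_betaMeasure_half {f : ℝ → ℝ≥0∞} (hf : Measurable f) :
    ENNReal.ofReal Real.pi * ∫⁻ x, f x ∂betaMeasure (1 / 2) (1 / 2) =
      ∫⁻ x in Ioo (0 : ℝ) 1, ENNReal.ofReal (√(x * (1 - x)))⁻¹ * f x := by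
  rw [← beta_half_half, beta_mul_lintegral_betaMeasure one_half_pos one_half_pos hf]
  refine setLIntegral_congr_fun measurableSet_Ioo fun x hx => ?_
  rw [show (1 / 2 - 1 : ℝ) = -(1 / 2) by norm_num, Real.rpow_neg hx.1.le,
    Real.rpow_neg (sub_nonneg.2 hx.2.le), ← mul_inv, ← Real.sqrt_eq_rpow, ← Real.sqrt_eq_rpow,
    ← Real.sqrt_mul hx.1.le]

lemma lintegral_Ioo_eq_pi_mul_lintegral_betaMeasure (r : ℝ) {u : ℝ} (hu : 0 < u) :
    ∫⁻ p in Ioo 0 u, ENNReal.ofReal ((√(p * (u - p)))⁻¹ * (1 - p) ^ (-r)) =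
      ENNReal.ofReal Real.pi *
        ∫⁻ v, ENNReal.ofReal ((1 - u * v) ^ (-r)) ∂betaMeasure (1 / 2) (1 / 2) := by
  have hbij : BijOn (fun v => u * v) (Ioo 0 1) (Ioo 0 u) :=
    InvOn.bijOn (f' := fun p => p / u)
      ⟨fun v _ => mul_div_cancel_left₀ v hu.ne', fun p _ => mul_div_cancel₀ p hu.ne'⟩
      (fun v hv => ⟨mul_pos hu hv.1, mul_lt_of_lt_one_right hu hv.2⟩)
      (fun p hp => ⟨div_pos hp.1 hu, (div_lt_one hu).2 hp.2⟩)
  rw [pi_mul_lintegral_betaMeasure_half (by fun_prop),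
    setLIntegral_eq_of_bijOn measurableSet_Ioo
    (fun v _ => by simpa using (hasDerivAt_id v).const_mul u) hbij]
  refine lintegral_congr fun v => ?_
  rw [← ENNReal.ofReal_mul (abs_nonneg u), ← ENNReal.ofReal_mul (by positivity), abs_of_pos hu,
    show u * v * (u - u * v) = u ^ 2 * (v * (1 - v)) by ring, Real.sqrt_mul (sq_nonneg u),
    Real.sqrt_sq hu.le, ← mul_assoc, mul_inv, mul_inv_cancel_left₀ hu.ne']

lemma ellipticMoment_eq_lintegral_betaMeasure (r : ℝ) :
    ellipticMoment r = ENNReal.ofReal (Real.pi ^ 2) *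
      ∫⁻ u, ∫⁻ v, ENNReal.ofReal ((1 - u * v) ^ (-r))
        ∂betaMeasure (1 / 2) (1 / 2) ∂betaMeasure (1 / 2) (1 / 2) := by
  have := isProbabilityMeasureBeta one_half_pos one_half_pos
  have hm : Measurable fun u : ℝ =>
      ∫⁻ v, ENNReal.ofReal ((1 - u * v) ^ (-r)) ∂betaMeasure (1 / 2) (1 / 2) :=
    Measurable.lintegral_prod_right' (f := fun q : ℝ × ℝ =>
      ENNReal.ofReal ((1 - q.1 * q.2) ^ (-r))) (by fun_prop)
  rw [← lintegral_arcsine_mul_Ioo_zero, sq, ENNReal.ofReal_mul Real.pi_pos.le, mul_assoc,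
    pi_mul_lintegral_betaMeasure_half hm, ← lintegral_const_mul' _ _ ENNReal.ofReal_ne_top]
  refine setLIntegral_congr_fun measurableSet_Ioo fun u hu => ?_
  simp only [lintegral_Ioo_eq_pi_mul_lintegral_betaMeasure r hu.1]
  rw [mul_left_comm]

lemma ellipticMoment_lt_top {r : ℝ} (h0 : 0 ≤ r) (h1 : r < 1) : ellipticMoment r < ⊤ := by
  rw [ellipticMoment_eq_lintegral_betaMeasure]
  exact ENNReal.mul_lt_top ENNReal.ofReal_lt_top
    (lintegral_betaMeasure_one_sub_mul_rpow_lt_top one_half_pos one_half_pos one_half_pos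
      one_half_pos h0 (by rwa [add_halves]))

lemma toReal_ellipticMoment {r : ℝ} (hr : 0 ≤ r) :
    (ellipticMoment r).toReal = Real.pi ^ 2 * threeF2 (1 / 2) (1 / 2) r 1 1 := by
  have h := threeF2_eq_lintegral_betaMeasure (r := r) one_half_pos one_half_pos one_half_pos
    one_half_pos hr
  rw [add_halves] at h
  rw [h, ellipticMoment_eq_lintegral_betaMeasure, ENNReal.toReal_mul,
    ENNReal.toReal_ofReal (by positivity)]

end EulerIntegral

section UpperHalfPlane

open Complex

lemma hasDerivAt_intervalIntegral_vertical {F : ℂ → ℂ} {s t : ℝ}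
    (hF : DifferentiableOn ℂ F (im ⁻¹' uIcc s t)) (x : ℝ) :
    HasDerivAt (fun x : ℝ => ∫ y in s..t, F (x + y * I)) (-I * (F (x + t * I) - F (x + s * I)))
      x := by
  have hcont {y : ℝ} (hy : y ∈ uIcc s t) : Continuous fun x : ℝ => F (x + y * I) :=
    hF.continuousOn.comp_continuous (by fun_prop) fun x => by simpa using hy
  let V (x : ℝ) : ℂ := ∫ y in s..t, F (x + y * I)
  have hrect (x : ℝ) : V x = V 0 + -I * ∫ ξ in (0 : ℝ)..x, (F (ξ + t * I) - F (ξ + s * I)) := by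
    have h := integral_boundary_rect_eq_zero_of_differentiableOn F (s * I) (x + t * I)
      (hF.mono fun w hw => by simpa using hw.2)
    rw [intervalIntegral.integral_sub ((hcont right_mem_uIcc).intervalIntegrable _ _)
      ((hcont left_mem_uIcc).intervalIntegrable _ _)]
    simp only [add_re, add_im, ofReal_re, ofReal_im, mul_re, mul_im, I_re, I_im, mul_zero, mul_one,
      zero_add, add_zero, sub_zero, smul_eq_mul] at h
    linear_combination -I * h + (V x - V 0) * I_sq
  have hderiv := ((hcont right_mem_uIcc).sub (hcont left_mem_uIcc)).integral_hasStrictDerivAt 0 x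
  exact ((hderiv.hasDerivAt.const_mul (-I)).const_add _).congr_of_eventuallyEq (.of_forall hrect)

-- The integral over a vertical segment is an integrable function of its abscissa, so its
-- derivative, which is the difference of the integrands on the two lines, has integral zero.
lemma integral_horizontal_eq {F : ℂ → ℂ} {g : ℝ → ℝ} {s t : ℝ}
    (hF : DifferentiableOn ℂ F (im ⁻¹' uIcc s t)) (hg : Integrable g)
    (hFg : ∀ᵐ x : ℝ, ∀ y ∈ uIcc s t, ‖F (x + y * I)‖ ≤ g x) :
    ∫ x : ℝ, F (x + t * I) = ∫ x : ℝ, F (x + s * I) := by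
  have hV := hasDerivAt_intervalIntegral_vertical hF
  have hVint : Integrable fun x : ℝ => ∫ y in s..t, F (x + y * I) := by
    refine (hg.mul_const |t - s|).mono'
      (continuous_iff_continuousAt.2 fun x => (hV x).continuousAt).aestronglyMeasurable ?_
    filter_upwards [hFg] with x hx
    exact intervalIntegral.norm_integral_le_of_norm_le_const fun y hy =>
      hx y (uIoc_subset_uIcc hy)
  have hint {y : ℝ} (hy : y ∈ uIcc s t) : Integrable fun x : ℝ => F (x + y * I) :=
    hg.mono' (hF.continuousOn.comp_continuous (by fun_prop) fun x => by
      simpa using hy).aestronglyMeasurable (hFg.mono fun x hx => hx y hy)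
  have h := integral_eq_zero_of_hasDerivAt_of_integrable hV
    (((hint right_mem_uIcc).sub (hint left_mem_uIcc)).const_mul (-I)) hVint
  rwa [integral_const_mul, mul_eq_zero_iff_left (neg_ne_zero.2 I_ne_zero),
    integral_sub (hint right_mem_uIcc) (hint left_mem_uIcc), sub_eq_zero] at h

theorem integral_boundary_upperHalfPlane_eq_zero {F : ℂ → ℂ} {f : ℝ → ℂ} {g : ℝ → ℝ}
    (hF : DifferentiableOn ℂ F {z | 0 < z.im}) (hg : Integrable g)
    (hFg : ∀ᵐ x : ℝ, ∀ y : ℝ, 0 < y → ‖F (x + y * I)‖ ≤ g x)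
    (hzero : ∀ᵐ x : ℝ, Tendsto (fun y : ℝ => F (x + y * I)) (𝓝[>] 0) (𝓝 (f x)))
    (htop : ∀ᵐ x : ℝ, Tendsto (fun y : ℝ => F (x + y * I)) atTop (𝓝 0)) :
    ∫ x, f x = 0 := by
  have hconst {y : ℝ} (hy : 0 < y) : ∫ x : ℝ, F (x + y * I) = ∫ x : ℝ, F (x + (1 : ℝ) * I) := by
    have hpos {η : ℝ} (hη : η ∈ uIcc 1 y) : 0 < η := (lt_min one_pos hy).trans_le hη.1
    exact integral_horizontal_eq (hF.mono fun z hz => hpos hz) hg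
      (hFg.mono fun x hx η hη => hx η (hpos hη))
  have hmeas {y : ℝ} (hy : 0 < y) : AEStronglyMeasurable (fun x : ℝ => F (x + y * I)) :=
    (hF.continuousOn.comp_continuous (by fun_prop) fun x => by simpa using hy).aestronglyMeasurable
  have hlim {l : Filter ℝ} [l.IsCountablyGenerated] {h : ℝ → ℂ} (hl : ∀ᶠ y in l, 0 < y)
      (hh : ∀ᵐ x : ℝ, Tendsto (fun y : ℝ => F (x + y * I)) l (𝓝 (h x))) :
      Tendsto (fun _ : ℝ => ∫ x : ℝ, F (x + (1 : ℝ) * I)) l (𝓝 (∫ x, h x)) :=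
    (tendsto_integral_filter_of_dominated_convergence g (hl.mono fun y hy => hmeas hy)
      (hl.mono fun y hy => hFg.mono fun x hx => hx y hy) hg hh).congr' (hl.mono fun y => hconst)
  rw [← tendsto_nhds_unique tendsto_const_nhds
      (hlim (eventually_mem_nhdsWithin (s := Ioi (0 : ℝ))) hzero),
    tendsto_nhds_unique tendsto_const_nhds (hlim (eventually_gt_atTop 0) htop), integral_zero]

end UpperHalfPlane

section ProductOfPowers

lemma integrableAtFilter_abs_sub_rpow {a : ℝ} (ha : a < 1) (c : ℝ) :
    IntegrableAtFilter (fun x : ℝ => |x - c| ^ (-a)) (𝓝 c) := by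
  have h : IntervalIntegrable (fun x : ℝ => |x - c| ^ (-a)) volume (-1 + c) (1 + c) := by
    have h := (intervalIntegral.intervalIntegrable_cpow' (a := -1) (b := 1) (r := (-a : ℝ))
      (by rw [Complex.ofReal_re]; linarith)).norm.comp_sub_right c
    simpa only [Complex.norm_cpow_real, Complex.norm_real, Real.norm_eq_abs] using h
  exact ⟨_, Ioc_mem_nhds (by linarith) (by linarith), h.1⟩

lemma abs_sub_rpow_neg_isBigO {a : ℝ} (ha : 0 ≤ a) (c : ℝ) :
    (fun x : ℝ => |x - c| ^ (-a)) =O[cocompact ℝ] fun x => (1 + ‖x‖) ^ (-a) := by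
  refine Asymptotics.IsBigO.of_bound (2 ^ a) ?_
  filter_upwards [(tendsto_norm_cocompact_atTop (E := ℝ)).eventually_ge_atTop (2 * ‖c‖ + 1)]
    with x hx
  have hxc : (1 + ‖x‖) / 2 ≤ |x - c| := by
    linarith [norm_sub_norm_le x c, Real.norm_eq_abs (x - c)]
  have hpos : 0 < 1 + ‖x‖ := by positivity
  rw [Real.norm_of_nonneg (by positivity), Real.norm_of_nonneg (by positivity)]
  calc |x - c| ^ (-a) ≤ ((1 + ‖x‖) / 2) ^ (-a) :=
        Real.rpow_le_rpow_of_nonpos (by positivity) hxc (neg_nonpos.2 ha)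
    _ = 2 ^ a * (1 + ‖x‖) ^ (-a) := by
        rw [Real.div_rpow hpos.le zero_le_two, Real.rpow_neg zero_le_two, div_inv_eq_mul, mul_comm]

variable {ι : Type*} [Fintype ι] {a c : ι → ℝ}

lemma locallyIntegrable_prod_abs_sub_rpow (hc : Function.Injective c) (ha : ∀ i, a i < 1) :
    LocallyIntegrable fun x => ∏ i, |x - c i| ^ (-a i) := by
  classical
  have hmeas : Measurable fun x : ℝ => ∏ i, |x - c i| ^ (-a i) := by fun_prop
  have hcont {x : ℝ} {s : Finset ι} (hs : ∀ i ∈ s, x ≠ c i) :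
      ContinuousAt (fun x => ∏ i ∈ s, |x - c i| ^ (-a i)) x :=
    tendsto_finsetProd s fun i hi => ContinuousAt.rpow_const (by fun_prop)
      (Or.inl (abs_pos.2 (sub_ne_zero.2 (hs i hi))).ne')
  intro x
  by_cases hx : ∃ i, x = c i
  · obtain ⟨i, rfl⟩ := hx
    have hO : (fun x => ∏ j ∈ Finset.univ.erase i, |x - c j| ^ (-a j)) =O[𝓝 (c i)]
        fun _ => (1 : ℝ) :=
      (hcont fun j hj => hc.ne (Finset.ne_of_mem_erase hj).symm).isBigO_one ℝ
    have h := (Asymptotics.isBigO_refl (fun x => |x - c i| ^ (-a i)) _).mul hO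
    have herase (x : ℝ) := Finset.mul_prod_erase _ (fun j => |x - c j| ^ (-a j)) (Finset.mem_univ i)
    simp only [herase, mul_one] at h
    exact h.integrableAtFilter hmeas.stronglyMeasurable.stronglyMeasurableAtFilter
      (integrableAtFilter_abs_sub_rpow (ha i) (c i))
  · push Not at hx
    exact (volume.finiteAt_nhds x).integrableAtFilter_of_tendsto
      hmeas.stronglyMeasurable.stronglyMeasurableAtFilter (hcont fun i _ => hx i)

lemma integrable_prod_abs_sub_rpow (hc : Function.Injective c) (ha0 : ∀ i, 0 ≤ a i)
    (ha1 : ∀ i, a i < 1) (hsum : 1 < ∑ i, a i) :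
    Integrable fun x => ∏ i, |x - c i| ^ (-a i) := by
  have hO := Asymptotics.IsBigO.finsetProd fun i (_ : i ∈ Finset.univ) =>
    abs_sub_rpow_neg_isBigO (ha0 i) (c i)
  have hprod (x : ℝ) : ∏ i, (1 + ‖x‖) ^ (-a i) = (1 + ‖x‖) ^ (-∑ i, a i) := by
    rw [← Real.rpow_sum_of_pos (by positivity), Finset.sum_neg_distrib]
  simp only [hprod] at hO
  exact (locallyIntegrable_prod_abs_sub_rpow hc ha1).integrable_of_isBigO_cocompact hO
    ((integrable_one_add_norm (by simpa using hsum)).integrableAtFilter _)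

lemma continuousWithinAt_cpow_im_nonneg {z : ℂ} (hz : z ≠ 0) (s : ℂ) :
    ContinuousWithinAt (fun w => w ^ s) {w | 0 ≤ w.im} z := by
  by_cases hslit : z ∈ Complex.slitPlane
  · exact (continuousAt_cpow_const hslit).continuousWithinAt
  rw [Complex.mem_slitPlane_iff_not_le_zero, not_not, Complex.le_def] at hslit
  have hre : z.re < 0 := hslit.1.lt_of_ne fun h => hz (Complex.ext h hslit.2)
  have hlog := Complex.continuousWithinAt_log_of_re_neg_of_im_zero hre hslit.2
  refine ((hlog.mul_const s).cexp).congr_of_eventuallyEq ?_ (Complex.cpow_def_of_ne_zero hz s)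
  filter_upwards [mem_nhdsWithin_of_mem_nhds (isOpen_ne.mem_nhds hz)] with w hw
  exact Complex.cpow_def_of_ne_zero hw s

lemma tendsto_ofReal_add_mul_I_cpow {x : ℝ} (hx : x ≠ 0) (s : ℂ) :
    Tendsto (fun y : ℝ => (x + y * Complex.I : ℂ) ^ s) (𝓝[>] 0) (𝓝 ((x : ℂ) ^ s)) := by
  refine (continuousWithinAt_cpow_im_nonneg (Complex.ofReal_ne_zero.2 hx) s).tendsto.comp
    (tendsto_nhdsWithin_iff.2 ⟨?_, ?_⟩)
  · exact (Continuous.tendsto' (by fun_prop) _ _ (by simp)).mono_left nhdsWithin_le_nhds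
  · filter_upwards [self_mem_nhdsWithin] with y hy
    simpa using le_of_lt hy

lemma tendsto_add_mul_I_cpow_neg_zero {a : ℝ} (ha : 0 < a) (z : ℂ) :
    Tendsto (fun y : ℝ => (z + y * Complex.I) ^ (-a : ℂ)) atTop (𝓝 0) := by
  have hnorm : Tendsto (fun y : ℝ => ‖z + y * Complex.I‖) atTop atTop := by
    refine tendsto_atTop_mono (fun y => Complex.abs_im_le_norm _)
      (tendsto_atTop_mono (fun y => le_abs_self _) ?_)
    simpa using tendsto_atTop_add_const_left atTop z.im tendsto_id
  rw [tendsto_zero_iff_norm_tendsto_zero]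
  simp only [← Complex.ofReal_neg, Complex.norm_cpow_real]
  exact (tendsto_rpow_neg_atTop ha).comp hnorm

theorem integral_prod_sub_cpow_eq_zero (hc : Function.Injective c) (ha0 : ∀ i, 0 < a i)
    (ha1 : ∀ i, a i < 1) (hsum : 1 < ∑ i, a i) :
    ∫ x : ℝ, ∏ i, ((x - c i : ℝ) : ℂ) ^ (-a i : ℂ) = 0 := by
  have hne (i : ι) : ∀ᵐ x : ℝ, x ≠ c i := Measure.ae_ne volume (c i)
  refine integral_boundary_upperHalfPlane_eq_zero (F := fun z => ∏ i, (z - c i) ^ (-a i : ℂ))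
    (fun z hz => ?_) (integrable_prod_abs_sub_rpow hc (fun i => (ha0 i).le) ha1 hsum) ?_ ?_ ?_
  · refine (DifferentiableAt.fun_finsetProd fun i _ =>
      DifferentiableAt.cpow_const (by fun_prop) ?_).differentiableWithinAt
    exact Or.inr (by simpa using (show 0 < z.im from hz).ne')
  · filter_upwards [ae_all_iff.2 hne] with x hx y _
    rw [norm_prod]
    refine Finset.prod_le_prod (fun i _ => norm_nonneg _) fun i _ => ?_
    have hxy : |x - c i| ≤ ‖(x + y * Complex.I - c i : ℂ)‖ := by
      simpa using Complex.abs_re_le_norm (x + y * Complex.I - c i)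
    rw [← Complex.ofReal_neg, Complex.norm_cpow_real]
    exact Real.rpow_le_rpow_of_nonpos (abs_pos.2 (sub_ne_zero.2 (hx i))) hxy
      (neg_nonpos.2 (ha0 i).le)
  · filter_upwards [ae_all_iff.2 hne] with x hx
    refine tendsto_finsetProd _ fun i _ => ?_
    simpa only [Complex.ofReal_sub, add_sub_right_comm] using
      tendsto_ofReal_add_mul_I_cpow (sub_ne_zero.2 (hx i)) (-a i : ℂ)
  · obtain ⟨i, -⟩ : ∃ i, a i ≠ 0 := by
      by_contra! h
      norm_num [h] at hsum
    refine .of_forall fun x => ?_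
    rw [← Finset.prod_eq_zero (Finset.mem_univ i) (f := fun _ => (0 : ℂ)) rfl]
    refine tendsto_finsetProd _ fun j _ => ?_
    simpa only [add_sub_right_comm] using tendsto_add_mul_I_cpow_neg_zero (ha0 j) (x - c j)

end ProductOfPowers

section Contour

open Complex (I)

/-- The modulus of `x ^ (-1/2) * (x - u) ^ (-1/2) * (x - 1) ^ (-r)` on the real line; the integrals
of this function over the intervals cut out by `0`, `u` and `1` are related by Cauchy's theorem. -/
noncomputable def contourKernel (u r x : ℝ) : ℝ :=
  |x| ^ (-(1 / 2) : ℝ) * |x - u| ^ (-(1 / 2) : ℝ) * |x - 1| ^ (-r)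

lemma contourKernel_nonneg (u r x : ℝ) : 0 ≤ contourKernel u r x := by
  unfold contourKernel
  positivity

lemma injective_zero_one_vec {u : ℝ} (hu : u ∈ Ioo (0 : ℝ) 1) :
    Function.Injective ![0, u, 1] := by
  have h0 := hu.1.ne
  have h1 := hu.2.ne
  intro i j
  fin_cases i <;> fin_cases j <;> simp [h0, h1, h0.symm, h1.symm]

lemma half_half_vec_mem_Ioo {r : ℝ} (hr : r ∈ Ioo (0 : ℝ) 1) (i : Fin 3) :
    (![1 / 2, 1 / 2, r] : Fin 3 → ℝ) i ∈ Ioo (0 : ℝ) 1 := by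
  fin_cases i
  exacts [⟨one_half_pos, one_half_lt_one⟩, ⟨one_half_pos, one_half_lt_one⟩, hr]

lemma one_lt_sum_half_half_vec {r : ℝ} (hr : 0 < r) :
    1 < ∑ i, (![1 / 2, 1 / 2, r] : Fin 3 → ℝ) i := by
  simp only [Fin.sum_univ_three, Matrix.cons_val]
  linarith

lemma integrable_contourKernel {u r : ℝ} (hu : u ∈ Ioo (0 : ℝ) 1) (hr : r ∈ Ioo (0 : ℝ) 1) :
    Integrable (contourKernel u r) := by
  have h := integrable_prod_abs_sub_rpow (injective_zero_one_vec hu)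
    (fun i => (half_half_vec_mem_Ioo hr i).1.le) (fun i => (half_half_vec_mem_Ioo hr i).2)
    (one_lt_sum_half_half_vec hr.1)
  simp only [Fin.prod_univ_three, Matrix.cons_val, sub_zero] at h
  exact h

/-- The function `x ^ (-1/2) * (x - u) ^ (-1/2) * (x - 1) ^ (-r)` on the real line, with the
boundary values of the powers from the upper half-plane. -/
noncomputable def contourFun (u r x : ℝ) : ℂ :=
  (x : ℂ) ^ ((-(1 / 2) : ℝ) : ℂ) * ((x - u : ℝ) : ℂ) ^ ((-(1 / 2) : ℝ) : ℂ) *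
    ((x - 1 : ℝ) : ℂ) ^ ((-r : ℝ) : ℂ)

lemma integral_contourFun {u r : ℝ} (hu : u ∈ Ioo (0 : ℝ) 1) (hr : r ∈ Ioo (0 : ℝ) 1) :
    ∫ x, contourFun u r x = 0 := by
  have h := integral_prod_sub_cpow_eq_zero (injective_zero_one_vec hu)
    (fun i => (half_half_vec_mem_Ioo hr i).1) (fun i => (half_half_vec_mem_Ioo hr i).2)
    (one_lt_sum_half_half_vec hr.1)
  simp only [Fin.prod_univ_three, Matrix.cons_val, sub_zero, ← Complex.ofReal_neg] at h
  exact h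

lemma norm_contourFun (u r x : ℝ) : ‖contourFun u r x‖ = contourKernel u r x := by
  simp only [contourFun, contourKernel, norm_mul, Complex.norm_cpow_real, Complex.norm_real,
    Real.norm_eq_abs]

lemma integrable_contourFun {u r : ℝ} (hu : u ∈ Ioo (0 : ℝ) 1) (hr : r ∈ Ioo (0 : ℝ) 1) :
    Integrable (contourFun u r) :=
  (integrable_contourKernel hu hr).mono' (by unfold contourFun; fun_prop)
    (.of_forall fun x => (norm_contourFun u r x).le)

lemma ofReal_cpow_of_pos {x : ℝ} (hx : 0 < x) (s : ℝ) : (x : ℂ) ^ (s : ℂ) = (|x| ^ s : ℝ) := by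
  rw [abs_of_pos hx, Complex.ofReal_cpow hx.le]

lemma ofReal_cpow_of_neg {x : ℝ} (hx : x < 0) (s : ℝ) :
    (x : ℂ) ^ (s : ℂ) = (|x| ^ s : ℝ) * Complex.exp (Real.pi * I * s) := by
  rw [abs_of_neg hx, Complex.ofReal_cpow_of_nonpos hx.le, Complex.ofReal_cpow (neg_nonneg.2 hx.le),
    Complex.ofReal_neg]

lemma integral_eq_Iio_add_Ioo_add_Ioo_add_Ioi {f : ℝ → ℂ} (hf : Integrable f) {a b c : ℝ}
    (hab : a ≤ b) (hbc : b ≤ c) :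
    ∫ x, f x = (∫ x in Iio a, f x) + (∫ x in Ioo a b, f x) + (∫ x in Ioo b c, f x) +
      ∫ x in Ioi c, f x := by
  rw [← intervalIntegral.integral_Iio_add_Ici hf.integrableOn hf.integrableOn (b := a),
    integral_Ici_eq_integral_Ioi, ← integral_Ioc_eq_integral_Ioo, ← integral_Ioc_eq_integral_Ioo,
    ← intervalIntegral.integral_of_le hab, ← intervalIntegral.integral_of_le hbc, add_assoc,
    add_assoc, intervalIntegral.integral_interval_add_Ioi hf.integrableOn hf.integrableOn,
    intervalIntegral.integral_interval_add_Ioi hf.integrableOn hf.integrableOn]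

lemma exp_pi_mul_I_mul_neg_half : Complex.exp (Real.pi * I * (-(1 / 2) : ℝ)) = -I := by
  rw [show (Real.pi * I * (-(1 / 2) : ℝ) : ℂ) = -(Real.pi / 2 * I) by push_cast; ring,
    Complex.exp_neg, Complex.exp_pi_div_two_mul_I, Complex.inv_I]

lemma setIntegral_contourFun {u r : ℝ} {s : Set ℝ} (hs : MeasurableSet s) {w : ℂ}
    (hw : ∀ x ∈ s, contourFun u r x = w * contourKernel u r x) :
    ∫ x in s, contourFun u r x = w * (∫ x in s, contourKernel u r x : ℝ) := by
  rw [setIntegral_congr_fun hs hw, integral_const_mul, integral_complex_ofReal]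

lemma contourFun_of_neg {u r x : ℝ} (hu : u ∈ Ioo (0 : ℝ) 1) (hx : x ∈ Iio 0) :
    contourFun u r x = -Complex.exp (Real.pi * I * (-r : ℝ)) * contourKernel u r x := by
  rw [mem_Iio] at hx
  rw [contourFun, contourKernel, ofReal_cpow_of_neg hx, ofReal_cpow_of_neg (by linarith [hu.1]),
    ofReal_cpow_of_neg (by linarith), exp_pi_mul_I_mul_neg_half, Complex.ofReal_mul,
    Complex.ofReal_mul]
  ring_nf
  rw [Complex.I_sq]
  ring

lemma contourFun_of_mem_Ioo_zero {u r x : ℝ} (hu : u ∈ Ioo (0 : ℝ) 1) (hx : x ∈ Ioo 0 u) :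
    contourFun u r x = -I * Complex.exp (Real.pi * I * (-r : ℝ)) * contourKernel u r x := by
  rw [contourFun, contourKernel, ofReal_cpow_of_pos hx.1, ofReal_cpow_of_neg (by linarith [hx.2]),
    ofReal_cpow_of_neg (by linarith [hx.2, hu.2]), exp_pi_mul_I_mul_neg_half, Complex.ofReal_mul,
    Complex.ofReal_mul]
  ring

lemma contourFun_of_mem_Ioo_one {u r x : ℝ} (hu : u ∈ Ioo (0 : ℝ) 1) (hx : x ∈ Ioo u 1) :
    contourFun u r x = Complex.exp (Real.pi * I * (-r : ℝ)) * contourKernel u r x := by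
  rw [contourFun, contourKernel, ofReal_cpow_of_pos (hu.1.trans hx.1),
    ofReal_cpow_of_pos (sub_pos.2 hx.1), ofReal_cpow_of_neg (sub_neg.2 hx.2), Complex.ofReal_mul,
    Complex.ofReal_mul]
  ring

lemma contourFun_of_one_lt {u r x : ℝ} (hu : u ∈ Ioo (0 : ℝ) 1) (hx : x ∈ Ioi 1) :
    contourFun u r x = 1 * contourKernel u r x := by
  rw [mem_Ioi] at hx
  rw [contourFun, contourKernel, ofReal_cpow_of_pos (by linarith),
    ofReal_cpow_of_pos (by linarith [hu.2]), ofReal_cpow_of_pos (by linarith), Complex.ofReal_mul,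
    Complex.ofReal_mul, one_mul]

lemma setIntegral_contourKernel_relation {u r : ℝ} (hu : u ∈ Ioo (0 : ℝ) 1)
    (hr : r ∈ Ioo (0 : ℝ) 1) :
    ((∫ x in Iio 0, contourKernel u r x : ℝ) : ℂ) + I * (∫ x in Ioo 0 u, contourKernel u r x : ℝ) =
      (∫ x in Ioo u 1, contourKernel u r x : ℝ) +
        Complex.exp (Real.pi * r * I) * (∫ x in Ioi 1, contourKernel u r x : ℝ) := by
  have h := integral_contourFun hu hr
  rw [integral_eq_Iio_add_Ioo_add_Ioo_add_Ioi (integrable_contourFun hu hr) hu.1.le hu.2.le,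
    setIntegral_contourFun measurableSet_Iio fun _ => contourFun_of_neg hu,
    setIntegral_contourFun measurableSet_Ioo fun _ => contourFun_of_mem_Ioo_zero hu,
    setIntegral_contourFun measurableSet_Ioo fun _ => contourFun_of_mem_Ioo_one hu,
    setIntegral_contourFun measurableSet_Ioi fun _ => contourFun_of_one_lt hu] at h
  have hexp : Complex.exp (Real.pi * r * I) * Complex.exp (Real.pi * I * (-r : ℝ)) = 1 := by
    rw [← Complex.exp_add, ← Complex.exp_zero]
    congr 1
    push_cast
    ring
  refine mul_left_cancel₀ (right_ne_zero_of_mul_eq_one hexp) ?_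
  linear_combination -h - (∫ x in Ioi 1, contourKernel u r x : ℝ) * hexp

lemma sin_mul_setIntegral_contourKernel {u r : ℝ} (hu : u ∈ Ioo (0 : ℝ) 1)
    (hr : r ∈ Ioo (0 : ℝ) 1) :
    Real.sin (Real.pi * r) * ∫ x in Iio 0, contourKernel u r x =
      Real.sin (Real.pi * r) * (∫ x in Ioo u 1, contourKernel u r x) +
        Real.cos (Real.pi * r) * ∫ x in Ioo 0 u, contourKernel u r x := by
  have h := setIntegral_contourKernel_relation hu hr
  rw [← Complex.ofReal_mul, Complex.exp_mul_I, ← Complex.ofReal_cos, ← Complex.ofReal_sin] at h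
  have hre := congrArg Complex.re h
  have him := congrArg Complex.im h
  simp only [Complex.add_re, Complex.add_im, Complex.mul_re, Complex.mul_im, Complex.ofReal_re,
    Complex.ofReal_im, Complex.I_re, Complex.I_im, mul_zero, zero_mul, mul_one, one_mul, add_zero,
    zero_add, sub_zero] at hre him
  linear_combination Real.sin (Real.pi * r) * hre - Real.cos (Real.pi * r) * him

lemma sin_pi_mul_nonneg {r : ℝ} (hr : r ∈ Ioc (0 : ℝ) (1 / 2)) : 0 ≤ Real.sin (Real.pi * r) :=
  Real.sin_nonneg_of_nonneg_of_le_pi (mul_nonneg Real.pi_pos.le hr.1.le)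
    (by nlinarith [Real.pi_pos, hr.2])

lemma cos_pi_mul_nonneg {r : ℝ} (hr : r ∈ Ioc (0 : ℝ) (1 / 2)) : 0 ≤ Real.cos (Real.pi * r) :=
  Real.cos_nonneg_of_neg_pi_div_two_le_of_le (by nlinarith [Real.pi_pos, hr.1])
    (by nlinarith [Real.pi_pos, hr.2])

lemma ofReal_sin_mul_setLIntegral_contourKernel {u r : ℝ} (hu : u ∈ Ioo (0 : ℝ) 1)
    (hr : r ∈ Ioc (0 : ℝ) (1 / 2)) :
    ENNReal.ofReal (Real.sin (Real.pi * r)) *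
        ∫⁻ x in Iio 0, ENNReal.ofReal (contourKernel u r x) =
      ENNReal.ofReal (Real.sin (Real.pi * r)) *
          (∫⁻ x in Ioo u 1, ENNReal.ofReal (contourKernel u r x)) +
        ENNReal.ofReal (Real.cos (Real.pi * r)) *
          ∫⁻ x in Ioo 0 u, ENNReal.ofReal (contourKernel u r x) := by
  have hr' : r ∈ Ioo (0 : ℝ) 1 := ⟨hr.1, hr.2.trans_lt one_half_lt_one⟩
  have hsin := sin_pi_mul_nonneg hr
  have hcos := cos_pi_mul_nonneg hr
  have hint (s : Set ℝ) : ∫⁻ x in s, ENNReal.ofReal (contourKernel u r x) =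
      ENNReal.ofReal (∫ x in s, contourKernel u r x) :=
    (ofReal_integral_eq_lintegral_ofReal (integrable_contourKernel hu hr').integrableOn
      (.of_forall (contourKernel_nonneg u r))).symm
  have hnonneg (s : Set ℝ) : 0 ≤ ∫ x in s, contourKernel u r x :=
    integral_nonneg (contourKernel_nonneg u r)
  simp only [hint, ← ENNReal.ofReal_mul hsin, ← ENNReal.ofReal_mul hcos]
  rw [← ENNReal.ofReal_add (mul_nonneg hsin (hnonneg _)) (mul_nonneg hcos (hnonneg _)),
    sin_mul_setIntegral_contourKernel hu hr']

lemma contourKernel_eq (u r x : ℝ) :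
    contourKernel u r x = (√|x * (x - u)|)⁻¹ * |x - 1| ^ (-r) := by
  rw [contourKernel, abs_mul, Real.sqrt_eq_rpow, ← Real.rpow_neg (by positivity),
    Real.mul_rpow (abs_nonneg _) (abs_nonneg _)]

lemma setLIntegral_Ioo_zero_contourKernel {u : ℝ} (hu : u ≤ 1) (r : ℝ) :
    ∫⁻ x in Ioo 0 u, ENNReal.ofReal (contourKernel u r x) =
      ∫⁻ p in Ioo 0 u, ENNReal.ofReal ((√(p * (u - p)))⁻¹ * (1 - p) ^ (-r)) := by
  refine setLIntegral_congr_fun measurableSet_Ioo fun p hp => ?_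
  rw [contourKernel_eq, abs_mul, abs_sub_comm p, abs_sub_comm p, abs_of_pos hp.1,
    abs_of_pos (sub_pos.2 hp.2), abs_of_pos (sub_pos.2 (hp.2.trans_le hu))]

lemma setLIntegral_Ioo_one_contourKernel {u : ℝ} (hu : 0 ≤ u) (r : ℝ) :
    ∫⁻ x in Ioo u 1, ENNReal.ofReal (contourKernel u r x) =
      ∫⁻ x in Ioo u 1, ENNReal.ofReal ((√(x * (x - u)))⁻¹ * (1 - x) ^ (-r)) := by
  refine setLIntegral_congr_fun measurableSet_Ioo fun x hx => ?_
  rw [contourKernel_eq, abs_mul, abs_sub_comm x 1, abs_of_pos (hu.trans_lt hx.1),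
    abs_of_pos (sub_pos.2 hx.1), abs_of_pos (sub_pos.2 hx.2)]

lemma setLIntegral_Iio_contourKernel {u : ℝ} (hu : 0 ≤ u) (r : ℝ) :
    ∫⁻ x in Iio 0, ENNReal.ofReal (contourKernel u r x) =
      ∫⁻ y in Ioi 0, ENNReal.ofReal ((√(y * (u + y)))⁻¹ * (1 + y) ^ (-r)) := by
  rw [setLIntegral_eq_of_bijOn measurableSet_Ioi (f := fun y => -y) (f' := fun _ => -1)
    (fun y _ => hasDerivAt_neg y) (t := Iio 0)
    ⟨fun y hy => mem_Iio.2 (neg_lt_zero.2 hy), neg_injective.injOn,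
      fun y (hy : y < 0) => ⟨-y, mem_Ioi.2 (neg_pos.2 hy), neg_neg y⟩⟩]
  refine setLIntegral_congr_fun measurableSet_Ioi fun y hy => ?_
  have hy : 0 < y := hy
  rw [abs_neg, abs_one, ENNReal.ofReal_one, one_mul, contourKernel_eq,
    show -y * (-y - u) = y * (u + y) by ring, show -y - 1 = -(1 + y) by ring, abs_neg,
    abs_of_nonneg (by positivity), abs_of_pos (by positivity)]

theorem ofReal_sin_mul_ellipticMoment_one_sub {r : ℝ} (hr : r ∈ Ioc (0 : ℝ) (1 / 2)) :
    ENNReal.ofReal (Real.sin (Real.pi * r)) * ellipticMoment (1 - r) =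
      ENNReal.ofReal (Real.sin (Real.pi * r)) * complementaryMoment r +
        ENNReal.ofReal (Real.cos (Real.pi * r)) * ellipticMoment r := by
  have hmeas : Measurable fun u => ∫⁻ p in Ioo 0 u,
      ENNReal.ofReal ((√(p * (u - p)))⁻¹ * (1 - p) ^ (-r)) :=
    measurable_lintegral_Ioo
      (F := fun u p => ENNReal.ofReal ((√(p * (u - p)))⁻¹ * (1 - p) ^ (-r)))
      (by simp only [Function.uncurry_def]; fun_prop) measurable_const measurable_id
  rw [← lintegral_arcsine_mul_Ioi, ← lintegral_arcsine_mul_Ioo_one,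
    ← lintegral_arcsine_mul_Ioo_zero, ← lintegral_const_mul' _ _ ENNReal.ofReal_ne_top,
    ← lintegral_const_mul' _ _ ENNReal.ofReal_ne_top,
    ← lintegral_const_mul' _ _ ENNReal.ofReal_ne_top, ← lintegral_add_right _ (by fun_prop)]
  refine setLIntegral_congr_fun measurableSet_Ioo fun u hu => ?_
  rw [← setLIntegral_Ioo_zero_contourKernel hu.2.le, ← setLIntegral_Ioo_one_contourKernel hu.1.le,
    ← setLIntegral_Iio_contourKernel hu.1.le, mul_left_comm,
    ofReal_sin_mul_setLIntegral_contourKernel hu hr]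
  ring

lemma sin_mul_toReal_ellipticMoment_one_sub {r : ℝ} (hr : r ∈ Ioc (0 : ℝ) (1 / 2)) :
    Real.sin (Real.pi * r) * (ellipticMoment (1 - r)).toReal =
      Real.sin (Real.pi * r) * (complementaryMoment r).toReal +
        Real.cos (Real.pi * r) * (ellipticMoment r).toReal := by
  have h := ofReal_sin_mul_ellipticMoment_one_sub hr
  have hE : ellipticMoment r ≠ ⊤ := (ellipticMoment_lt_top hr.1.le (by linarith [hr.2])).ne
  have hE' : ellipticMoment (1 - r) ≠ ⊤ :=
    (ellipticMoment_lt_top (by linarith [hr.2]) (by linarith [hr.1])).ne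
  have hC : ENNReal.ofReal (Real.sin (Real.pi * r)) * complementaryMoment r ≠ ⊤ :=
    ne_top_of_le_ne_top (ENNReal.mul_ne_top ENNReal.ofReal_ne_top hE') (h ▸ le_self_add)
  have h' := congrArg ENNReal.toReal h
  rwa [ENNReal.toReal_add hC (ENNReal.mul_ne_top ENNReal.ofReal_ne_top hE), ENNReal.toReal_mul,
    ENNReal.toReal_mul, ENNReal.toReal_mul, ENNReal.toReal_ofReal (sin_pi_mul_nonneg hr),
    ENNReal.toReal_ofReal (cos_pi_mul_nonneg hr)] at h'

end Contour

section Moments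

lemma ae_quarticMeasure_mem_Icc : ∀ᵐ x ∂quarticMeasure, x ∈ Icc (0 : ℝ) 1 :=
  ae_quarticMeasure_mem_Ioo.mono fun _ hx => Ioo_subset_Icc_self hx

instance isFiniteMeasure_quarticMeasure : IsFiniteMeasure quarticMeasure := by
  have h := ellipticMoment_eq_lintegral_pow (i := 0) (j := 3) rfl
  simp only [pow_zero, ENNReal.ofReal_one, lintegral_one] at h
  exact ⟨h ▸ ellipticMoment_lt_top (by positivity) (by norm_num)⟩

lemma integrable_quarticMeasure {f : ℝ → ℝ} (hf : Continuous f) : Integrable f quarticMeasure := by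
  rw [← Measure.restrict_eq_self_of_ae_mem ae_quarticMeasure_mem_Icc]
  exact hf.continuousOn.integrableOn_compact isCompact_Icc

/-- The moments `∫ x ^ k` of the quartic measure, to which both families of elliptic moments
reduce. -/
noncomputable def quarticMoment (k : ℕ) : ℝ :=
  ∫ x, x ^ k ∂quarticMeasure

lemma toReal_ellipticMoment_eq_quarticMoment {i j : ℕ} (hij : i + j = 3) :
    (ellipticMoment ((2 * j + 1) / 8)).toReal = quarticMoment i := by
  rw [ellipticMoment_eq_lintegral_pow hij, quarticMoment,
    integral_eq_lintegral_of_nonneg_ae _ (by fun_prop)]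
  filter_upwards [ae_quarticMeasure_mem_Ioo] with x hx using pow_nonneg hx.1.le i

lemma sqrt_two_mul_toReal_complementaryMoment {i j : ℕ} (hij : i + j = 3) :
    √2 * (complementaryMoment ((2 * j + 1) / 8)).toReal =
      ∫ x, (1 - x) ^ i * (1 + x) ^ j ∂quarticMeasure := by
  rw [integral_eq_lintegral_of_nonneg_ae _ (by fun_prop), ← sqrt_two_mul_complementaryMoment hij,
    ENNReal.toReal_mul, ENNReal.toReal_ofReal (by positivity)]
  filter_upwards [ae_quarticMeasure_mem_Ioo] with x hx
  exact mul_nonneg (pow_nonneg (sub_nonneg.2 hx.2.le) i) (pow_nonneg (by linarith [hx.1]) j)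

lemma quarticMoment_relation {i j : ℕ} (hij : i + j = 3) (hj : j ≤ 1) :
    √2 * (Real.sin (Real.pi * ((2 * j + 1) / 8)) * quarticMoment j -
        Real.cos (Real.pi * ((2 * j + 1) / 8)) * quarticMoment i) =
      Real.sin (Real.pi * ((2 * j + 1) / 8)) *
        ∫ x, (1 - x) ^ i * (1 + x) ^ j ∂quarticMeasure := by
  have hj' : (j : ℝ) ≤ 1 := mod_cast hj
  have hij' : (i : ℝ) + j = 3 := mod_cast hij
  have h := sin_mul_toReal_ellipticMoment_one_sub (r := (2 * j + 1) / 8)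
    ⟨by positivity, by linarith⟩
  rw [show (1 - (2 * j + 1) / 8 : ℝ) = (2 * i + 1) / 8 by linarith,
    toReal_ellipticMoment_eq_quarticMoment hij,
    toReal_ellipticMoment_eq_quarticMoment ((add_comm j i).trans hij)] at h
  rw [← sqrt_two_mul_toReal_complementaryMoment hij]
  linear_combination √2 * h

lemma integral_one_sub_pow_three :
    ∫ x, (1 - x) ^ 3 * (1 + x) ^ 0 ∂quarticMeasure =
      quarticMoment 0 - 3 * quarticMoment 1 + 3 * quarticMoment 2 - quarticMoment 3 := by
  have hint {f : ℝ → ℝ} (hf : Continuous f) := integrable_quarticMeasure hf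
  simp only [quarticMoment, ← integral_const_mul]
  rw [← integral_sub (hint (by fun_prop)) (hint (by fun_prop)),
    ← integral_add (hint (by fun_prop)) (hint (by fun_prop)),
    ← integral_sub (hint (by fun_prop)) (hint (by fun_prop))]
  exact integral_congr_ae (.of_forall fun x => by ring)

lemma integral_one_sub_sq_mul_one_add :
    ∫ x, (1 - x) ^ 2 * (1 + x) ^ 1 ∂quarticMeasure =
      quarticMoment 0 - quarticMoment 1 - quarticMoment 2 + quarticMoment 3 := by
  have hint {f : ℝ → ℝ} (hf : Continuous f) := integrable_quarticMeasure hf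
  simp only [quarticMoment]
  rw [← integral_sub (hint (by fun_prop)) (hint (by fun_prop)),
    ← integral_sub (hint (by fun_prop)) (hint (by fun_prop)),
    ← integral_add (hint (by fun_prop)) (hint (by fun_prop))]
  exact integral_congr_ae (.of_forall fun x => by ring)

lemma sin_pi_div_eight_pos : 0 < Real.sin (Real.pi / 8) :=
  Real.sin_pos_of_pos_of_lt_pi (by positivity) (by linarith [Real.pi_pos])

lemma cos_pi_div_eight_eq : Real.cos (Real.pi / 8) = (1 + √2) * Real.sin (Real.pi / 8) := by
  have hsin : 2 * Real.sin (Real.pi / 8) * Real.cos (Real.pi / 8) = √2 / 2 := by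
    rw [← Real.sin_two_mul, ← Real.sin_pi_div_four]
    ring_nf
  have hcos : 1 - 2 * Real.sin (Real.pi / 8) ^ 2 = √2 / 2 := by
    rw [← Real.cos_two_mul_eq_one_sub, ← Real.cos_pi_div_four]
    ring_nf
  have hsq : √2 ^ 2 = 2 := Real.sq_sqrt zero_le_two
  refine mul_left_cancel₀ sin_pi_div_eight_pos.ne' ?_
  linear_combination hsin / 2 + (1 + √2) / 2 * hcos + hsq / 4

lemma sin_three_pi_div_eight : Real.sin (Real.pi * (3 / 8)) = Real.cos (Real.pi / 8) := by
  rw [← Real.sin_pi_div_two_sub]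
  ring_nf

lemma cos_three_pi_div_eight : Real.cos (Real.pi * (3 / 8)) = Real.sin (Real.pi / 8) := by
  rw [← Real.cos_pi_div_two_sub]
  ring_nf

lemma sin_five_pi_div_eight : Real.sin (Real.pi * (5 / 8)) = Real.cos (Real.pi / 8) := by
  rw [← Real.cos_sub_pi_div_two]
  ring_nf

lemma sin_seven_pi_div_eight : Real.sin (Real.pi * (7 / 8)) = Real.sin (Real.pi / 8) := by
  rw [← Real.sin_pi_sub]
  ring_nf

lemma quarticMoment_linear_relations :
    quarticMoment 3 = √2 * quarticMoment 1 - quarticMoment 2 ∧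
      quarticMoment 0 = quarticMoment 1 + √2 * quarticMoment 2 := by
  have hs := sin_pi_div_eight_pos.ne'
  have hsq : √2 ^ 2 = 2 := Real.sq_sqrt zero_le_two
  have h0 := quarticMoment_relation (i := 3) (j := 0) rfl zero_le_one
  have h1 := quarticMoment_relation (i := 2) (j := 1) rfl le_rfl
  rw [integral_one_sub_pow_three,
    show Real.pi * ((2 * (0 : ℕ) + 1) / 8) = Real.pi / 8 by push_cast; ring,
    cos_pi_div_eight_eq] at h0
  rw [integral_one_sub_sq_mul_one_add,
    show ((2 * (1 : ℕ) + 1) / 8 : ℝ) = 3 / 8 by norm_num,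
    sin_three_pi_div_eight, cos_three_pi_div_eight, cos_pi_div_eight_eq] at h1
  replace h0 : (√2 - 1) * quarticMoment 0 + 3 * quarticMoment 1 - 3 * quarticMoment 2 -
      (√2 + 1) * quarticMoment 3 = 0 := by
    refine mul_left_cancel₀ hs ?_
    linear_combination h0 + Real.sin (Real.pi / 8) * quarticMoment 3 * hsq
  replace h1 : quarticMoment 0 + quarticMoment 3 =
      (√2 + 1) * quarticMoment 1 + (√2 - 1) * quarticMoment 2 := by
    refine mul_left_cancel₀ hs ?_
    linear_combination (1 - √2) * h1 +
      Real.sin (Real.pi / 8) *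
        ((1 + √2) * quarticMoment 1 - quarticMoment 0 - quarticMoment 3) * hsq
  have h3 : quarticMoment 3 = √2 * quarticMoment 1 - quarticMoment 2 := by
    refine mul_left_cancel₀ (show 2 * √2 ≠ 0 by positivity) ?_
    linear_combination -h0 + (√2 - 1) * h1 + (quarticMoment 2 - quarticMoment 1) * hsq
  exact ⟨h3, by linear_combination h1 - h3⟩

end Moments

section KummerValues

lemma Fval_eq_ellipticMoment {q : ℚ} (hq : 0 ≤ q) : Fval q 1 =
    (2 : ℝ) ^ ((1 : ℝ) - 4 * q) * (Real.pi / Real.sin (Real.pi * q)) / (2 * q.den) *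
      ((ellipticMoment q).toReal / Real.pi ^ 2) := by
  rw [toReal_ellipticMoment (Rat.cast_nonneg.2 hq), Fval, betaFn, Rat.cast_one, add_sub_cancel,
    Real.Gamma_one, div_one, Real.Gamma_mul_Gamma_one_sub,
    mul_div_cancel_left₀ _ (pow_ne_zero 2 Real.pi_ne_zero)]

lemma den_odd_div_eight (j : ℕ) : ((2 * j + 1) / 8 : ℚ).den = 8 := by
  have hcop : (2 * j + 1).Coprime (2 ^ 3) :=
    .pow_right 3 (Nat.coprime_two_right.2 (odd_two_mul_add_one j))
  have h := Rat.den_div_eq_of_coprime (a := (2 * j + 1 : ℕ)) (b := (8 : ℕ)) (by norm_num) hcop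
  push_cast at h
  exact Nat.cast_injective h

lemma Fval_eq_quarticMoment {i j : ℕ} (hij : i + j = 3) {q : ℚ} (hq : q = (2 * j + 1) / 8) :
    Fval q 1 =
      √2 / (16 * Real.pi) / 2 ^ j / Real.sin (Real.pi * q) * quarticMoment i := by
  have hpow : (2 : ℝ) ^ ((1 : ℝ) - 4 * q) = √2 / 2 ^ j := by
    rw [Real.sqrt_eq_rpow, ← Real.rpow_natCast, ← Real.rpow_sub two_pos, hq]
    congr 1
    push_cast
    ring
  have hmoment : (ellipticMoment q).toReal = quarticMoment i := by
    rw [← toReal_ellipticMoment_eq_quarticMoment hij, hq]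
    push_cast
    rfl
  have hden : q.den = 8 := hq ▸ den_odd_div_eight j
  rw [Fval_eq_ellipticMoment (hq ▸ by positivity), hpow, hmoment, hden]
  push_cast
  field_simp
  ring

lemma Fval_relations :
    Fval (1 / 8) 1 = -2 * (1 + √2) * (Fval (3 / 8) 1 - 2 * √2 * Fval (5 / 8) 1) ∧
      8 * Fval (7 / 8) 1 = 2 * (1 + √2) * (√2 * Fval (3 / 8) 1 + 2 * Fval (5 / 8) 1) := by
  have F1 := Fval_eq_quarticMoment (i := 3) (j := 0) (q := 1 / 8) rfl (by norm_num)
  have F3 := Fval_eq_quarticMoment (i := 2) (j := 1) (q := 3 / 8) rfl (by norm_num)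
  have F5 := Fval_eq_quarticMoment (i := 1) (j := 2) (q := 5 / 8) rfl (by norm_num)
  have F7 := Fval_eq_quarticMoment (i := 0) (j := 3) (q := 7 / 8) rfl (by norm_num)
  push_cast at F1 F3 F5 F7
  rw [mul_one_div] at F1
  rw [sin_three_pi_div_eight, cos_pi_div_eight_eq] at F3
  rw [sin_five_pi_div_eight, cos_pi_div_eight_eq] at F5
  rw [sin_seven_pi_div_eight] at F7
  obtain ⟨h3, h0⟩ := quarticMoment_linear_relations
  have hs := sin_pi_div_eight_pos.ne'
  rw [F1, F3, F5, F7, h3, h0]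
  constructor <;>
  · field_simp
    ring

end KummerValues

open Complex in
/-- F(1/8,1) + 8i·F(7/8,1) = −2·(1 − i√2)·(1 + √2)·(F(3/8,1) − 2i·F(5/8,1)). -/
theorem three_term_class6_kummer :
    (Fval (1/8) 1 : ℂ) + 8 * I * (Fval (7/8) 1 : ℂ) =
      -2 * (1 - I * (Real.sqrt 2 : ℂ)) * (1 + (Real.sqrt 2 : ℂ)) *
        ((Fval (3/8) 1 : ℂ) - 2 * I * (Fval (5/8) 1 : ℂ)) := by
  have hre := congrArg Complex.ofReal Fval_relations.1
  have him := congrArg Complex.ofReal Fval_relations.2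
  push_cast at hre him
  linear_combination hre + I * him +
    4 * (√2 : ℂ) * (1 + (√2 : ℂ)) * (Fval (5 / 8) 1 : ℂ) * I_sq
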